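/- arXiv:2306.14863 — 4 statements merged into one kernel-verified Lean document; each statement's English description precedes it below -/
import Mathlib

section
/- Grigorchuk–Nekrashevych–Suschanskiǐ: The rational homeomorphisms of the Cantor space 𝔠 form a subgroup of the homeomorphism group of 𝔠; that is, the identity is rational, the composition of two rational homeomorphisms is rational, and the inverse of a rational homeomorphism is rational. -/
/-- Concatenation of a finite word with an infinite sequence. -/
def wordAppend {A : Type*} (α : List A) (x : ℕ → A) : ℕ → A :=
  fun n => if h : n < α.length then α.get ⟨n, h⟩ else x (n - α.length)

/-- The cone determined by a finite word: all sequences having it as a prefix. -/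
def cone {A : Type*} (α : List A) : Set (ℕ → A) := Set.range (wordAppend α)

/-- `g` is the local action of the homeomorphism `f` at the word `α`:
there is a word `β` with `f (α ⌢ x) = β ⌢ (g x)` for all `x`, and `β` is the longest
common prefix of the image of the cone `C_α` (witnessed by two image points that
differ in the coordinate immediately after `β`). -/
def IsLocalAction {A : Type*} [TopologicalSpace A] (f : (ℕ → A) ≃ₜ (ℕ → A)) (α : List A)
    (g : (ℕ → A) → (ℕ → A)) : Prop :=
  ∃ β : List A, (∀ x, f (wordAppend α x) = wordAppend β (g x)) ∧ ∃ x y, g x 0 ≠ g y 0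

/-- A homeomorphism of a Cantor space of sequences is rational if it has only
finitely many distinct local actions. -/
def IsRational {A : Type*} [TopologicalSpace A] (f : (ℕ → A) ≃ₜ (ℕ → A)) : Prop :=
  {g | ∃ α, IsLocalAction f α g}.Finite

theorem wa_lt {A : Type*} (α : List A) (x : ℕ → A) (n : ℕ) (h : n < α.length) :
    wordAppend α x n = α[n] := by
  simp [wordAppend, h]

theorem wa_add {A : Type*} (α : List A) (x : ℕ → A) (n : ℕ) :
    wordAppend α x (α.length + n) = x n := by
  simp [wordAppend]

theorem wa_inj {A : Type*} (α : List A) {x y : ℕ → A}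
    (h : wordAppend α x = wordAppend α y) : x = y := by
  funext n
  rw [← wa_add α x n, h, wa_add]

theorem wa_append {A : Type*} (α β : List A) (x : ℕ → A) :
    wordAppend (α ++ β) x = wordAppend α (wordAppend β x) := by
  funext n
  by_cases h : n < α.length
  · rw [wa_lt _ _ _ h, wa_lt _ _ _ (by simp; omega), List.getElem_append_left h]
  · obtain ⟨m, rfl⟩ := Nat.exists_eq_add_of_le (not_lt.mp h)
    rw [wa_add]
    by_cases h2 : m < β.length
    · rw [wa_lt _ _ _ h2, wa_lt _ _ _ (by simp; omega), List.getElem_append_right (by omega)]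
      simp
    · obtain ⟨l, rfl⟩ := Nat.exists_eq_add_of_le (not_lt.mp h2)
      rw [wa_add, ← add_assoc, ← List.length_append, wa_add]

/-- A common prefix is a prefix of the longest common prefix. -/
theorem wa_prefix {A X : Type*} (γ β : List A) (u k : X → ℕ → A)
    (h : ∀ x, wordAppend γ (u x) = wordAppend β (k x)) (hk : ∃ x y, k x 0 ≠ k y 0) :
    ∃ δ, β = γ ++ δ ∧ ∀ x, u x = wordAppend δ (k x) := by
  obtain ⟨a, b, hab⟩ := hk
  have hlen : γ.length ≤ β.length := by
    by_contra hlt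
    push Not at hlt
    apply hab
    rw [← wa_add β (k a) 0, ← wa_add β (k b) 0, ← h a, ← h b, add_zero, wa_lt _ _ _ hlt,
      wa_lt _ _ _ hlt]
  have htake : β.take γ.length = γ := by
    apply List.ext_getElem
    · simpa using hlen
    · intro n h1 h2
      have := congrFun (h a) n
      rw [wa_lt _ _ _ h2, wa_lt _ _ _ (by omega)] at this
      simp [this]
  have hβ : β = γ ++ β.drop γ.length := by
    conv_lhs => rw [← List.take_append_drop γ.length β, htake]
  refine ⟨β.drop γ.length, hβ, fun x => ?_⟩
  apply wa_inj γ
  rw [← wa_append, ← hβ, h]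

theorem wa_unique {A X : Type*} (γ β : List A) (u k : X → ℕ → A)
    (h : ∀ x, wordAppend γ (u x) = wordAppend β (k x)) (hk : ∃ x y, k x 0 ≠ k y 0)
    (hu : ∃ x y, u x 0 ≠ u y 0) : u = k := by
  obtain ⟨δ, h1, h2⟩ := wa_prefix γ β u k h hk
  obtain ⟨δ', h1', -⟩ := wa_prefix β γ k u (fun x => (h x).symm) hu
  have : δ = [] := by
    have e1 := congrArg List.length h1
    have e2 := congrArg List.length h1'
    simp only [List.length_append] at e1 e2
    exact List.length_eq_zero_iff.mp (by omega)
  subst this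
  funext x
  rw [h2 x]
  funext n
  simp [wordAppend]

/-- Existence of the longest common prefix. -/
theorem exists_strip {A X : Type*} (F : X → ℕ → A) (a b : X) (hF : F a ≠ F b) :
    ∃ (β : List A) (k : X → ℕ → A), (∀ x, F x = wordAppend β (k x)) ∧
      ∃ x y, k x 0 ≠ k y 0 := by
  classical
  have hex : ∃ n, ∃ x y, F x n ≠ F y n := by
    obtain ⟨n, hn⟩ := Function.ne_iff.mp hF
    exact ⟨n, a, b, hn⟩
  have hmin : ∀ m < Nat.find hex, ∀ x y, F x m = F y m := by
    intro m hm x y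
    by_contra hne
    exact Nat.find_min hex hm ⟨x, y, hne⟩
  refine ⟨List.ofFn (fun i : Fin (Nat.find hex) => F a i),
    fun x n => F x (Nat.find hex + n), fun x => ?_, by simpa using Nat.find_spec hex⟩
  funext n
  by_cases h : n < Nat.find hex
  · rw [wa_lt _ _ _ (by simpa using h)]
    simpa using hmin n h x a
  · obtain ⟨m, hm⟩ := Nat.exists_eq_add_of_le (not_lt.mp h)
    have := wa_add (List.ofFn (fun i : Fin (Nat.find hex) => F a i))
      (fun n => F x (Nat.find hex + n)) m
    rw [List.length_ofFn, ← hm] at this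
    exact this.symm

theorem exists_localAction (f : (ℕ → Bool) ≃ₜ (ℕ → Bool)) (α : List Bool) :
    ∃ (β : List Bool) (k : (ℕ → Bool) → ℕ → Bool),
      (∀ x, f (wordAppend α x) = wordAppend β (k x)) ∧ ∃ x y, k x 0 ≠ k y 0 := by
  apply exists_strip (fun x => f (wordAppend α x)) (fun _ => true) (fun _ => false)
  intro h
  have := congrFun (wa_inj α (f.injective h)) 0
  simp at this

theorem unif_dep (φ : (ℕ → Bool) → Bool) (hφ : Continuous φ) :
    ∃ N : ℕ, ∀ z w : ℕ → Bool, (∀ i < N, z i = w i) → φ z = φ w := by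
  by_contra hcon
  push Not at hcon
  let K : ℕ → Set ((ℕ → Bool) × (ℕ → Bool)) :=
    fun N => {p | φ p.1 ≠ φ p.2} ∩ {p | ∀ i < N, p.1 i = p.2 i}
  have hcl : ∀ N, IsClosed (K N) := by
    intro N
    apply IsClosed.inter
    · have hc : Continuous (fun p : (ℕ → Bool) × (ℕ → Bool) => (φ p.1, φ p.2)) := by fun_prop
      exact (isClosed_discrete {q : Bool × Bool | q.1 ≠ q.2}).preimage hc
    · simp only [Set.ofPred_forall]
      refine isClosed_iInter fun i => isClosed_iInter fun _ => ?_
      exact isClosed_eq (by fun_prop) (by fun_prop)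
  obtain ⟨p, hp⟩ := IsCompact.nonempty_iInter_of_sequence_nonempty_isCompact_isClosed K
    (fun n p hp => ⟨hp.1, fun i hi => hp.2 i (by omega)⟩)
    (fun n => by
      obtain ⟨z, w, h1, h2⟩ := hcon n
      exact ⟨(z, w), h2, h1⟩)
    (hcl 0).isCompact hcl
  rw [Set.mem_iInter] at hp
  apply (hp 0).1
  congr 1
  funext i
  exact (hp (i + 1)).2 i (by omega)

theorem rat_refl : IsRational (Homeomorph.refl (ℕ → Bool)) := by
  apply (Set.finite_singleton (id : (ℕ → Bool) → ℕ → Bool)).subset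
  rintro g ⟨α, β, h, hg⟩
  exact (wa_unique α β id g h hg ⟨fun _ => true, fun _ => false, by simp⟩).symm

theorem rat_trans (f g : (ℕ → Bool) ≃ₜ (ℕ → Bool)) (hf : IsRational f) (hg : IsRational g) :
    IsRational (f.trans g) := by
  unfold IsRational at *
  let S : ((ℕ → Bool) → ℕ → Bool) → Set ((ℕ → Bool) → ℕ → Bool) :=
    fun h => {k | ∃ β, (∀ x, h x = wordAppend β (k x)) ∧ ∃ x y, k x 0 ≠ k y 0}
  have hS : ∀ h, (S h).Finite := by
    intro h
    apply Set.Subsingleton.finite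
    rintro k ⟨β, h1, h2⟩ k' ⟨β', h1', h2'⟩
    exact wa_unique β β' k k' (fun x => by rw [← h1, ← h1']) h2' h2
  apply (hf.biUnion fun f' _ => hg.biUnion fun g' _ => hS (g' ∘ f')).subset
  rintro k ⟨α, β, h, hk⟩
  obtain ⟨β₁, f', hf1, hf2⟩ := exists_localAction f α
  obtain ⟨γ, g', hg1, hg2⟩ := exists_localAction g β₁
  obtain ⟨δ, -, hδ⟩ := wa_prefix γ β (fun x => g' (f' x)) k
    (fun x => by rw [← h, ← hg1, ← hf1]; rfl) hk
  simp only [Set.mem_iUnion]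
  exact ⟨f', ⟨α, β₁, hf1, hf2⟩, g', ⟨β₁, γ, hg1, hg2⟩, δ, hδ, hk⟩

theorem rat_symm (f : (ℕ → Bool) ≃ₜ (ℕ → Bool)) (hf : IsRational f) : IsRational f.symm := by
  unfold IsRational at *
  let S : ((ℕ → Bool) → ℕ → Bool) → Set ((ℕ → Bool) → ℕ → Bool) :=
    fun h => {k | (∃ δ, ∀ x, h (k x) = wordAppend δ x) ∧ ∃ x y, k x 0 ≠ k y 0}
  have hS : ∀ h ∈ {g | ∃ α, IsLocalAction f α g}, (S h).Finite := by
    rintro h ⟨β, γ, h1, -⟩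
    have hinj : Function.Injective h := by
      intro u v huv
      apply wa_inj β
      apply f.injective
      rw [h1, h1, huv]
    obtain ⟨N, hN⟩ := unif_dep (fun z => f.symm z β.length)
      ((continuous_apply β.length).comp f.symm.continuous)
    have key : ∀ u v, (∀ i < N, h u i = h v i) → u 0 = v 0 := by
      intro u v huv
      have := hN (f (wordAppend β u)) (f (wordAppend β v)) (by
        intro i hi
        rw [h1, h1]
        unfold wordAppend
        split_ifs
        · rfl
        · exact huv _ (by omega))
      simp only [Homeomorph.symm_apply_apply] at this
      rwa [← add_zero β.length, wa_add, wa_add] at this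
    have hfin : (⋃ δ ∈ {δ : List Bool | δ.length < N},
        {k : (ℕ → Bool) → ℕ → Bool | ∀ x, h (k x) = wordAppend δ x}).Finite := by
      apply (List.finite_length_lt Bool N).biUnion
      intro δ _
      apply Set.Subsingleton.finite
      intro k hk k' hk'
      funext x
      exact hinj ((hk x).trans (hk' x).symm)
    apply hfin.subset
    rintro k ⟨⟨δ, hδ⟩, x, y, hxy⟩
    simp only [Set.mem_iUnion]
    refine ⟨δ, ?_, hδ⟩
    by_contra hlen
    simp only [Set.mem_ofPred_eq, not_lt] at hlen
    apply hxy
    apply key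
    intro i hi
    rw [hδ, hδ, wa_lt _ _ _ (by omega), wa_lt _ _ _ (by omega)]
  apply (hf.biUnion hS).subset
  rintro k ⟨α, β, h, hk⟩
  obtain ⟨γ, f', hf1, hf2⟩ := exists_localAction f β
  obtain ⟨δ, -, hδ⟩ := wa_prefix γ α (fun x => f' (k x)) id
    (fun x => by rw [← hf1, ← h]; simp) ⟨fun _ => true, fun _ => false, by simp⟩
  simp only [Set.mem_iUnion]
  exact ⟨f', ⟨β, γ, hf1, hf2⟩, ⟨δ, hδ⟩, hk⟩

/-!
Grigorchuk–Nekrashevych–Suschanskiǐ (2000): the rational homeomorphisms of the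
Cantor space `ℕ → Bool` form a group under composition: the identity is rational,
the composition of two rational homeomorphisms is rational, and the inverse of a
rational homeomorphism is rational.
-/
theorem rational_homeomorphisms_form_a_group :
    IsRational (Homeomorph.refl (ℕ → Bool)) ∧
    (∀ f g : (ℕ → Bool) ≃ₜ (ℕ → Bool), IsRational f → IsRational g →
      IsRational (f.trans g)) ∧
    (∀ f : (ℕ → Bool) ≃ₜ (ℕ → Bool), IsRational f → IsRational f.symm) := by
  exact ⟨rat_refl, rat_trans, rat_symm⟩
end

section
/- Belk–Hyde–Matucci: The rational group ℛ, i.e. the group of rational homeomorphisms of the Cantor space 𝔠 under composition, is a simple group. -/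
/-- The group of self-homeomorphisms of a topological space, under composition. -/
instance homeoGroup {X : Type*} [TopologicalSpace X] : Group (X ≃ₜ X) where
  mul f g := g.trans f
  one := Homeomorph.refl X
  inv := Homeomorph.symm
  mul_assoc _ _ _ := rfl
  one_mul _ := Homeomorph.ext fun _ => rfl
  mul_one _ := Homeomorph.ext fun _ => rfl
  inv_mul_cancel := Homeomorph.self_trans_symm

namespace RatSimple

abbrev X := ℕ → Bool

/-- Prepend a letter. -/
def cns (b : Bool) (x : X) : X := fun n => Nat.casesOn n b x

/-- Drop the first letter. -/
def tl (x : X) : X := fun n => x (n + 1)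

@[simp] theorem cns_zero (b : Bool) (x : X) : cns b x 0 = b := rfl
@[simp] theorem cns_succ (b : Bool) (x : X) (n : ℕ) : cns b x (n + 1) = x n := rfl
@[simp] theorem tl_cns (b : Bool) (x : X) : tl (cns b x) = x := rfl
@[simp] theorem cns_tl (x : X) : cns (x 0) (tl x) = x := by
  funext n; cases n <;> rfl

theorem cns_inj {b : Bool} {x y : X} (h : cns b x = cns b y) : x = y := by
  have := congrArg tl h
  simpa using this

theorem exists_cns (x : X) : ∃ b y, x = cns b y := ⟨x 0, tl x, (cns_tl x).symm⟩

theorem continuous_cns (b : Bool) : Continuous (cns b) := by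
  refine continuous_pi fun n => ?_
  cases n with
  | zero => exact continuous_const
  | succ n => exact continuous_apply n

theorem continuous_tl : Continuous tl := continuous_pi fun n => continuous_apply (n + 1)

@[simp] theorem wa_nil (x : X) : wordAppend [] x = x := by
  funext n; simp [wordAppend]

@[simp] theorem wa_cons (a : Bool) (α : List Bool) (x : X) :
    wordAppend (a :: α) x = cns a (wordAppend α x) := by
  funext n; cases n <;> simp [wordAppend]

theorem wa_append (α β : List Bool) (x : X) :
    wordAppend (α ++ β) x = wordAppend α (wordAppend β x) := by
  induction α with
  | nil => simp
  | cons a α ih => simp [ih]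

theorem wa_lt (α : List Bool) (x : X) (n : ℕ) (h : n < α.length) :
    wordAppend α x n = α[n] := by
  simp [wordAppend, h]

theorem wa_add (α : List Bool) (x : X) (n : ℕ) :
    wordAppend α x (α.length + n) = x n := by
  simp [wordAppend]

theorem continuous_wa (α : List Bool) : Continuous (wordAppend α : X → X) := by
  induction α with
  | nil =>
    have : (wordAppend [] : X → X) = fun x => x := by funext x; simp
    rw [this]
    exact continuous_id
  | cons a α ih =>
    have : (wordAppend (a :: α) : X → X) = fun x => cns a (wordAppend α x) := by
      funext x; simp
    rw [this]
    exact (continuous_cns a).comp ih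

/-- Rationality for arbitrary self-maps, without requiring prefixes to be maximal. -/
def WR (f : X → X) : Prop :=
  ∃ S : Set (X → X), S.Finite ∧ ∀ α : List Bool, ∃ β : List Bool, ∃ g ∈ S,
    ∀ x, f (wordAppend α x) = wordAppend β (g x)

theorem WR.of_rational (f : X ≃ₜ X) (hf : IsRational f) : WR f := by
  refine ⟨_, hf, fun α => ?_⟩
  have hex : ∃ n, ∃ x y, f (wordAppend α x) n ≠ f (wordAppend α y) n := by
    have hne : f (wordAppend α (fun _ => true)) ≠ f (wordAppend α (fun _ => false)) := by
      intro h
      have h2 := congrFun (f.injective h) (α.length + 0)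
      rw [wa_add, wa_add] at h2
      simp at h2
    obtain ⟨n, hn⟩ := Function.ne_iff.1 hne
    exact ⟨n, _, _, hn⟩
  classical
  let n := Nat.find hex
  have hn : ∃ x y, f (wordAppend α x) n ≠ f (wordAppend α y) n := Nat.find_spec hex
  have hmin : ∀ m < n, ∀ x y, f (wordAppend α x) m = f (wordAppend α y) m := by
    intro m hm x y
    by_contra hc
    exact Nat.find_min hex hm ⟨x, y, hc⟩
  let β : List Bool := List.ofFn (fun i : Fin n => f (wordAppend α (fun _ => true)) i)
  let g : X → X := fun x m => f (wordAppend α x) (n + m)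
  have hβ : ∀ x, f (wordAppend α x) = wordAppend β (g x) := by
    intro x
    funext m
    have hl : β.length = n := by simp [β]
    by_cases hm : m < n
    · rw [wa_lt β _ m (by omega)]
      simp only [β, List.getElem_ofFn]
      exact hmin m hm _ _
    · obtain ⟨k, rfl⟩ := Nat.exists_eq_add_of_le (not_lt.1 hm)
      have := wa_add β (g x) k
      rw [hl] at this
      rw [this]
  refine ⟨β, g, ⟨α, β, hβ, ?_⟩, hβ⟩
  obtain ⟨x, y, h⟩ := hn
  exact ⟨x, y, h⟩

theorem len_le {β γ : List Bool} {g g' : X → X}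
    (h : ∀ x, wordAppend β (g x) = wordAppend γ (g' x))
    (hne : ∃ x y, g' x 0 ≠ g' y 0) : β.length ≤ γ.length := by
  by_contra hc
  obtain ⟨x, y, hxy⟩ := hne
  apply hxy
  have key : ∀ z, g' z 0 = β[γ.length]'(by omega) := by
    intro z
    rw [← wa_add γ (g' z) 0, ← h z, add_zero, wa_lt]
  rw [key, key]

theorem WR.rational (f : X ≃ₜ X) (hf : WR f) : IsRational f := by
  obtain ⟨S, hS, h⟩ := hf
  let T : (X → X) → Set (X → X) := fun g =>
    {g' | ∃ γ : List Bool, (∀ x, g x = wordAppend γ (g' x)) ∧ ∃ x y, g' x 0 ≠ g' y 0}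
  have hT : ∀ g, (T g).Subsingleton := by
    rintro g g₁ ⟨γ, h₁, n₁⟩ g₂ ⟨δ, h₂, n₂⟩
    have e : ∀ x, wordAppend γ (g₁ x) = wordAppend δ (g₂ x) := fun x => by rw [← h₁, ← h₂]
    have l1 := len_le e n₂
    have l2 := len_le (fun x => (e x).symm) n₁
    have l : γ.length = δ.length := le_antisymm l1 l2
    funext x n
    rw [← wa_add γ (g₁ x) n, e, l, wa_add]
  refine (hS.biUnion (fun g _ => (hT g).finite)).subset ?_
  rintro g' ⟨α, β', h', hne⟩
  obtain ⟨β, g, hg, hβ⟩ := h α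
  have e : ∀ x, wordAppend β (g x) = wordAppend β' (g' x) := fun x => by rw [← hβ, ← h']
  have l := len_le e hne
  refine Set.mem_biUnion hg ⟨β'.drop β.length, fun x => ?_, hne⟩
  funext n
  rw [← wa_add β (g x) n, e]
  by_cases hn : β.length + n < β'.length
  · rw [wa_lt _ _ _ hn, wa_lt _ _ _ (by simp; omega)]
    simp
  · obtain ⟨k, hk⟩ := Nat.exists_eq_add_of_le (not_lt.1 hn)
    have h1 := wa_add (β'.drop β.length) (g' x) k
    have h2 : (β'.drop β.length).length + k = n := by simp; omega
    rw [hk, wa_add, ← h1, h2]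

theorem WR.comp {f h : X → X} (hf : WR f) (hh : WR h) : WR (fun x => f (h x)) := by
  obtain ⟨S, hS, h1⟩ := hf
  obtain ⟨T, hT, h2⟩ := hh
  refine ⟨Set.image2 (fun k g => fun x => k (g x)) S T, hS.image2 _ hT, fun α => ?_⟩
  obtain ⟨β, g, hg, e⟩ := h2 α
  obtain ⟨γ, k, hk, e'⟩ := h1 β
  exact ⟨γ, _, ⟨k, hk, g, hg, rfl⟩, fun x => by simp [e, e']⟩

theorem WR.split {f : X → X} (h : ∀ b, WR (fun x => f (cns b x))) : WR f := by
  choose S hS h using h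
  refine ⟨insert f (⋃ b, S b), (Set.finite_iUnion hS).insert _, fun α => ?_⟩
  cases α with
  | nil => exact ⟨[], f, by simp, by simp⟩
  | cons a α =>
    obtain ⟨β, g, hg, e⟩ := h a α
    exact ⟨β, g, Or.inr (Set.mem_iUnion.2 ⟨a, hg⟩), by simpa using e⟩

theorem WR.id' : WR (fun x => x) :=
  ⟨{fun x => x}, Set.finite_singleton _, fun α => ⟨α, _, rfl, fun _ => rfl⟩⟩

theorem WR.cns' (b : Bool) : WR (cns b) :=
  ⟨{fun x => x}, Set.finite_singleton _, fun α => ⟨b :: α, _, rfl, fun x => by simp⟩⟩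

theorem WR.tl' : WR tl := WR.split fun _ => WR.id'

theorem WR.at {f : X → X} (hf : WR f) (b : Bool) : WR (fun x => f (cns b x)) :=
  hf.comp (WR.cns' b)

open Classical in
theorem WR.piece_aux (n : ℕ) : ∀ (D : Set X) (f g : X → X), WR f → WR g →
    (∀ x y : X, (∀ i < n, x i = y i) → x ∈ D → y ∈ D) →
    WR (fun x => if x ∈ D then f x else g x) := by
  induction n with
  | zero =>
    intro D f g hf hg hD
    by_cases h : ∃ x, x ∈ D
    · obtain ⟨x, hx⟩ := h
      have : ∀ y, y ∈ D := fun y => hD x y (by simp) hx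
      simpa [this] using hf
    · push Not at h
      simpa [h] using hg
  | succ n ih =>
    intro D f g hf hg hD
    refine WR.split fun b => ?_
    refine ih {x | cns b x ∈ D} _ _ (hf.at b) (hg.at b) ?_
    intro x y hxy hx
    refine hD _ _ ?_ hx
    intro i hi
    cases i with
    | zero => rfl
    | succ i => exact hxy i (by omega)

/-- Neighbourhoods contain prefix-agreement sets. -/
theorem exists_agree {x : X} {U : Set X} (hU : U ∈ nhds x) :
    ∃ n, ∀ y : X, (∀ i < n, x i = y i) → y ∈ U := by
  rw [nhds_pi, Filter.mem_pi] at hU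
  obtain ⟨I, hI, t, ht, hsub⟩ := hU
  obtain ⟨n, hn⟩ := hI.bddAbove
  refine ⟨n + 1, fun y hy => hsub fun i hi => ?_⟩
  rw [← hy i (Nat.lt_succ_of_le (hn hi))]
  exact mem_of_mem_nhds (ht i)

theorem exists_wa {x : X} {U : Set X} (hU : U ∈ nhds x) :
    ∃ γ : List Bool, γ ≠ [] ∧ ∀ y, wordAppend γ y ∈ U := by
  obtain ⟨n, hn⟩ := exists_agree hU
  refine ⟨List.ofFn (fun i : Fin (n + 1) => x i), by simp, fun y => hn _ ?_⟩
  intro i hi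
  rw [wa_lt _ _ _ (by simp; omega), List.getElem_ofFn]

theorem clopen_agree {D : Set X} (hD : IsClopen D) :
    ∃ n, ∀ x y : X, (∀ i < n, x i = y i) → x ∈ D → y ∈ D := by
  have : ∃ n, ∀ x ∈ D, ∀ y : X, (∀ i < n, x i = y i) → y ∈ D := by
    refine IsCompact.induction_on (p := fun s => ∃ n, ∀ x ∈ s, ∀ y : X,
      (∀ i < n, x i = y i) → y ∈ D) hD.1.isCompact ⟨0, by simp⟩ ?_ ?_ ?_
    · rintro s t hst ⟨n, hn⟩
      exact ⟨n, fun x hx => hn x (hst hx)⟩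
    · rintro s t ⟨n, hn⟩ ⟨m, hm⟩
      refine ⟨max n m, fun x hx y hxy => ?_⟩
      rcases hx with hx | hx
      · exact hn x hx y fun i hi => hxy i (lt_of_lt_of_le hi (le_max_left _ _))
      · exact hm x hx y fun i hi => hxy i (lt_of_lt_of_le hi (le_max_right _ _))
    · intro x hx
      obtain ⟨n, hn⟩ := exists_agree (hD.2.mem_nhds hx)
      refine ⟨{y | ∀ i < n, x i = y i}, ?_, n, ?_⟩
      · apply mem_nhdsWithin_of_mem_nhds
        have : {y : X | ∀ i < n, x i = y i} = ⋂ i ∈ Set.Iio n, {y : X | x i = y i} := by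
          ext y; simp
        rw [this, Filter.biInter_mem (Set.finite_Iio n)]
        intro i _
        have ho : IsOpen {y : X | x i = y i} :=
          (isOpen_discrete {b : Bool | x i = b}).preimage (continuous_apply i)
        exact ho.mem_nhds rfl
      · intro z hz y hy
        exact hn y fun i hi => (hz i hi).trans (hy i hi)
  obtain ⟨n, hn⟩ := this
  exact ⟨n, fun x y h hx => hn x hx y h⟩

open Classical in
theorem WR.piece {D : Set X} (hD : IsClopen D) {f g : X → X} (hf : WR f) (hg : WR g) :
    WR (fun x => if x ∈ D then f x else g x) := by
  obtain ⟨n, hn⟩ := clopen_agree hD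
  exact WR.piece_aux n D f g hf hg hn

open Classical in
theorem cont_piece {D : Set X} (hD : IsClopen D) {f g : X → X} (hf : Continuous f)
    (hg : Continuous g) : Continuous (fun x => if x ∈ D then f x else g x) := by
  refine continuous_if (fun a ha => ?_) hf.continuousOn hg.continuousOn
  have : a ∈ frontier D := ha
  rw [hD.frontier_eq] at this
  exact this.elim

theorem clopen_zero (b : Bool) : IsClopen {x : X | x 0 = b} :=
  (isClopen_discrete ({b} : Set Bool)).preimage (continuous_apply 0)

theorem cont_split {f : X → X} (h : ∀ b, Continuous (fun x => f (cns b x))) : Continuous f := by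
  have : f = fun x => if x ∈ {x : X | x 0 = true} then f (cns true (tl x))
      else f (cns false (tl x)) := by
    funext x
    obtain ⟨b, y, rfl⟩ := exists_cns x
    cases b <;> simp
  rw [this]
  have := cont_piece (clopen_zero true) ((h true).comp continuous_tl)
    ((h false).comp continuous_tl)
  simp only [Function.comp_def] at this
  convert this

abbrev H := X ≃ₜ X

@[simp] theorem mul_ap (f g : H) (x : X) : (f * g) x = f (g x) := rfl
@[simp] theorem one_ap (x : X) : (1 : H) x = x := rfl
@[simp] theorem inv_ap_self (f : H) (x : X) : f⁻¹ (f x) = x := f.symm_apply_apply x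
@[simp] theorem self_ap_inv (f : H) (x : X) : f (f⁻¹ x) = x := f.apply_symm_apply x

/-- Act by `f` on the cone of `false` and by `g` on the cone of `true`. -/
def pairFun (f g : X → X) (x : X) : X :=
  cns (x 0) (if x 0 then g (tl x) else f (tl x))

@[simp] theorem pairFun_f (f g : X → X) (x : X) :
    pairFun f g (cns false x) = cns false (f x) := by simp [pairFun]
@[simp] theorem pairFun_t (f g : X → X) (x : X) :
    pairFun f g (cns true x) = cns true (g x) := by simp [pairFun]

theorem continuous_pairFun {f g : X → X} (hf : Continuous f) (hg : Continuous g) :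
    Continuous (pairFun f g) := by
  refine cont_split fun b => ?_
  cases b
  · simpa [Function.comp_def] using (continuous_cns false).comp hf
  · simpa [Function.comp_def] using (continuous_cns true).comp hg

theorem WR.pairFun {f g : X → X} (hf : WR f) (hg : WR g) : WR (pairFun f g) := by
  refine WR.split fun b => ?_
  cases b
  · simpa using (WR.cns' false).comp hf
  · simpa using (WR.cns' true).comp hg

def pair (f g : H) : H where
  toFun := pairFun f g
  invFun := pairFun f.symm g.symm
  left_inv x := by
    obtain ⟨b, y, rfl⟩ := exists_cns x
    cases b <;> simp
  right_inv x := by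
    obtain ⟨b, y, rfl⟩ := exists_cns x
    cases b <;> simp
  continuous_toFun := continuous_pairFun f.continuous g.continuous
  continuous_invFun := continuous_pairFun f.symm.continuous g.symm.continuous

@[simp] theorem pair_f (f g : H) (x : X) : pair f g (cns false x) = cns false (f x) :=
  pairFun_f f g x
@[simp] theorem pair_t (f g : H) (x : X) : pair f g (cns true x) = cns true (g x) :=
  pairFun_t f g x

theorem H_ext {f g : H} (h : ∀ b x, f (cns b x) = g (cns b x)) : f = g := by
  refine Homeomorph.ext fun x => ?_
  obtain ⟨b, y, rfl⟩ := exists_cns x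
  exact h b y

theorem pair_mul (a b c d : H) : pair a b * pair c d = pair (a * c) (b * d) := by
  refine H_ext fun b x => ?_
  cases b <;> simp

theorem pair_one : pair 1 1 = 1 := by
  refine H_ext fun b x => ?_
  cases b <;> simp

theorem pair_inv (a b : H) : (pair a b)⁻¹ = pair a⁻¹ b⁻¹ := by
  rw [inv_eq_iff_mul_eq_one, pair_mul]
  simp [pair_one]

/-- Flip the first letter. -/
def flip : H where
  toFun x := cns (!(x 0)) (tl x)
  invFun x := cns (!(x 0)) (tl x)
  left_inv x := by simp
  right_inv x := by simp
  continuous_toFun := cont_split fun b => by simpa using continuous_cns _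
  continuous_invFun := cont_split fun b => by simpa using continuous_cns _

@[simp] theorem flip_cns (b : Bool) (x : X) : flip (cns b x) = cns (!b) x := rfl

theorem WR.flip : WR flip := WR.split fun b => by simpa using WR.cns' _

theorem flip_pair (a b : H) : flip * pair a b * flip⁻¹ = pair b a := by
  rw [mul_inv_eq_iff_eq_mul]
  refine H_ext fun b x => ?_
  cases b <;> simp

/-- The Thompson-type map `0x ↦ 00x, 10x ↦ 01x, 11x ↦ 1x`. -/
def sFun (x : X) : X :=
  if x 0 then (if x 1 then tl x else cns false (cns true (tl (tl x)))) else cns false x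

def sInv (x : X) : X :=
  if x 0 then cns true x else (if x 1 then cns true (cns false (tl (tl x))) else tl x)

theorem cns_one (b : Bool) (x : X) : cns b x 1 = x 0 := rfl

@[simp] theorem sFun_f (x : X) : sFun (cns false x) = cns false (cns false x) := by
  simp [sFun]
@[simp] theorem sFun_tf (x : X) : sFun (cns true (cns false x)) = cns false (cns true x) := by
  simp [sFun]
@[simp] theorem sFun_tt (x : X) : sFun (cns true (cns true x)) = cns true x := by
  simp [sFun]
@[simp] theorem sInv_t (x : X) : sInv (cns true x) = cns true (cns true x) := by
  simp [sInv]
@[simp] theorem sInv_ft (x : X) : sInv (cns false (cns true x)) = cns true (cns false x) := by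
  simp [sInv]
@[simp] theorem sInv_ff (x : X) : sInv (cns false (cns false x)) = cns false x := by
  simp [sInv]

def sH : H where
  toFun := sFun
  invFun := sInv
  left_inv x := by
    obtain ⟨b, x, rfl⟩ := exists_cns x
    obtain ⟨c, x, rfl⟩ := exists_cns x
    cases b <;> cases c <;> simp
  right_inv x := by
    obtain ⟨b, x, rfl⟩ := exists_cns x
    obtain ⟨c, x, rfl⟩ := exists_cns x
    cases b <;> cases c <;> simp
  continuous_toFun := by
    refine cont_split fun b => cont_split fun c => ?_
    cases b <;> cases c <;> simp
    · exact (continuous_cns _).comp ((continuous_cns _).comp (continuous_cns _))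
    · exact (continuous_cns _).comp ((continuous_cns _).comp (continuous_cns _))
    · exact (continuous_cns _).comp (continuous_cns _)
    · exact continuous_cns _
  continuous_invFun := by
    refine cont_split fun b => cont_split fun c => ?_
    cases b <;> cases c <;> simp
    · exact continuous_cns _
    · exact (continuous_cns _).comp (continuous_cns _)
    · exact (continuous_cns _).comp ((continuous_cns _).comp (continuous_cns _))
    · exact (continuous_cns _).comp ((continuous_cns _).comp (continuous_cns _))

@[simp] theorem sH_f (x : X) : sH (cns false x) = cns false (cns false x) := sFun_f x
@[simp] theorem sH_tf (x : X) : sH (cns true (cns false x)) = cns false (cns true x) := sFun_tf x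
@[simp] theorem sH_tt (x : X) : sH (cns true (cns true x)) = cns true x := sFun_tt x

theorem WR.sH : WR sH := by
  refine WR.split fun b => WR.split fun c => ?_
  cases b <;> cases c <;> simp
  · exact (WR.cns' _).comp ((WR.cns' _).comp (WR.cns' _))
  · exact (WR.cns' _).comp ((WR.cns' _).comp (WR.cns' _))
  · exact (WR.cns' _).comp (WR.cns' _)
  · exact WR.cns' _

theorem s_pair (a b c : H) : sH * pair a (pair b c) * sH⁻¹ = pair (pair a b) c := by
  rw [mul_inv_eq_iff_eq_mul]
  refine H_ext fun b x => ?_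
  obtain ⟨c, x, rfl⟩ := exists_cns x
  cases b <;> cases c <;> simp

/-- The infinite swindle: `0^n 1 x ↦ 0^n 1 f(x)`, coordinatewise. -/
def swc (f : X → X) : ℕ → X → Bool
  | 0, x => x 0
  | n + 1, x => if x 0 then f (tl x) n else swc f n (tl x)

def sw (f : X → X) (x : X) : X := fun n => swc f n x

@[simp] theorem sw_f (f : X → X) (x : X) : sw f (cns false x) = cns false (sw f x) := by
  funext n; cases n <;> simp [sw, swc]
@[simp] theorem sw_t (f : X → X) (x : X) : sw f (cns true x) = cns true (f x) := by
  funext n; cases n <;> simp [sw, swc]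

theorem continuous_sw {f : X → X} (hf : Continuous f) : Continuous (sw f) := by
  refine continuous_pi fun n => ?_
  change Continuous (swc f n)
  induction n with
  | zero => exact continuous_apply 0
  | succ n ih =>
    have : swc f (n + 1) = fun x => bif x 0 then f (tl x) n else swc f n (tl x) := by
      funext x; cases h : x 0 <;> simp [swc, h]
    rw [this]
    have h1 : Continuous (fun x : X => (x 0, f (tl x) n, swc f n (tl x))) :=
      (continuous_apply 0).prodMk
        (((continuous_apply n).comp (hf.comp continuous_tl)).prodMk (ih.comp continuous_tl))
    exact (continuous_of_discreteTopology
      (f := fun p : Bool × Bool × Bool => bif p.1 then p.2.1 else p.2.2)).comp h1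

theorem sw_sw {f g : X → X} (h : ∀ x, f (g x) = x) (x : X) : sw f (sw g x) = x := by
  funext n
  induction n generalizing x with
  | zero => rfl
  | succ n ih =>
    obtain ⟨b, x, rfl⟩ := exists_cns x
    cases b
    · simp [ih]
    · simp [h]

theorem WR.sw {f : X → X} (hf : WR f) : WR (sw f) := by
  obtain ⟨S, hS, h⟩ := hf
  refine ⟨insert (RatSimple.sw f) S, hS.insert _, fun α => ?_⟩
  induction α with
  | nil => exact ⟨[], _, Or.inl rfl, by simp⟩
  | cons a α ih =>
    cases a
    · obtain ⟨β, g, hg, e⟩ := ih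
      exact ⟨false :: β, g, hg, by simp [e]⟩
    · obtain ⟨β, g, hg, e⟩ := h α
      exact ⟨true :: β, g, Or.inr hg, by simp [e]⟩

def swH (f : H) : H where
  toFun := sw f
  invFun := sw f.symm
  left_inv x := sw_sw (by simp) x
  right_inv x := sw_sw (by simp) x
  continuous_toFun := continuous_sw f.continuous
  continuous_invFun := continuous_sw f.symm.continuous

theorem swH_eq (f : H) : swH f = pair (swH f) f := by
  refine H_ext fun b x => ?_
  cases b
  · rw [pair_f]; exact sw_f f x
  · rw [pair_t]; exact sw_t f x

theorem swindle (f : H) :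
    pair (swH f) 1 * (sH * (pair (swH f) 1)⁻¹ * sH⁻¹) = pair (pair 1 f) 1 := by
  rw [pair_inv]
  have : pair (swH f)⁻¹ 1⁻¹ = pair (swH f)⁻¹ (pair 1 1) := by rw [pair_one]; simp
  rw [this, s_pair, pair_mul]
  nth_rewrite 1 [swH_eq]
  rw [pair_mul]
  simp

/-- An element fixing the cone of `true` pointwise is a `pair f 1`. -/
theorem exists_pair (e : H) (h : ∀ x, e (cns true x) = cns true x) :
    ∃ f : H, e = pair f 1 ∧ (WR e → WR f) := by
  have h' : ∀ x, e.symm (cns true x) = cns true x := fun x => by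
    rw [Homeomorph.symm_apply_eq, h]
  have key : ∀ e : H, (∀ x, e (cns true x) = cns true x) → ∀ x,
      e (cns false x) = cns false (tl (e (cns false x))) := by
    intro e h x
    obtain ⟨b, y, hy⟩ := exists_cns (e (cns false x))
    rw [hy]
    cases b
    · simp
    · rw [← h y] at hy
      have := congrFun (e.injective hy) 0
      simp at this
  let f : H :=
    { toFun := fun x => tl (e (cns false x))
      invFun := fun x => tl (e.symm (cns false x))
      left_inv := fun x => by simp only [← key e h]; simp
      right_inv := fun x => by simp only [← key e.symm h']; simp
      continuous_toFun := continuous_tl.comp (e.continuous.comp (continuous_cns _))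
      continuous_invFun := continuous_tl.comp (e.symm.continuous.comp (continuous_cns _)) }
  refine ⟨f, ?_, fun he => WR.tl'.comp (he.at false)⟩
  refine H_ext fun b x => ?_
  cases b
  · rw [pair_f]; exact key e h x
  · simp [h]

theorem main_aux (R N : Subgroup H) (hR : ∀ f, f ∈ R ↔ WR f)
    (hNR : N ≤ R) (hconj : ∀ r ∈ R, ∀ n ∈ N, r * n * r⁻¹ ∈ N)
    (hN : N ≠ ⊥) : R ≤ N := by
  have hpair : ∀ a b, a ∈ R → b ∈ R → pair a b ∈ R := fun a b ha hb =>
    (hR _).2 (((hR a).1 ha).pairFun ((hR b).1 hb))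
  have hflip : flip ∈ R := (hR _).2 WR.flip
  have hs : sH ∈ R := (hR _).2 WR.sH
  have h1 : (1 : H) ∈ R := R.one_mem
  have hcomm : ∀ r ∈ R, ∀ n ∈ N, r⁻¹ * n * r ∈ N := fun r hr n hn => by
    simpa using hconj r⁻¹ (R.inv_mem hr) n hn
  -- transitivity
  have hA : ∀ γ : List Bool, γ ≠ [] → ∃ r ∈ R, ∀ x, ∃ y, r (cns false x) = wordAppend γ y := by
    intro γ
    induction γ with
    | nil => simp
    | cons b γ ih =>
      intro _
      by_cases hγ : γ = []
      · subst hγ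
        cases b
        · exact ⟨1, h1, fun x => ⟨x, by simp⟩⟩
        · exact ⟨flip, hflip, fun x => ⟨x, by simp⟩⟩
      · obtain ⟨r, hr, e⟩ := ih hγ
        cases b
        · refine ⟨pair r r * sH, R.mul_mem (hpair _ _ hr hr) hs, fun x => ?_⟩
          obtain ⟨y, hy⟩ := e x
          exact ⟨y, by simp [hy]⟩
        · refine ⟨pair r r * (flip * sH), R.mul_mem (hpair _ _ hr hr) (R.mul_mem hflip hs),
            fun x => ?_⟩
          obtain ⟨y, hy⟩ := e x
          exact ⟨y, by simp [hy]⟩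
  -- an element of `N` moving a cone off itself
  obtain ⟨h, hhN, hh⟩ : ∃ h ∈ N, ∀ x, ∃ y, h (cns false x) = cns true y := by
    obtain ⟨h, hhN, hne⟩ := N.bot_or_exists_ne_one.resolve_left hN
    obtain ⟨x, hx⟩ : ∃ x, h x ≠ x := by
      by_contra hc
      push Not at hc
      exact hne (Homeomorph.ext hc)
    obtain ⟨U, V, hU, hV, hxU, hxV, hd⟩ := t2_separation hx
    have hnb : V ∩ h ⁻¹' U ∈ nhds x :=
      (hV.inter (hU.preimage h.continuous)).mem_nhds ⟨hxV, hxU⟩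
    obtain ⟨γ, hγ, hγU⟩ := exists_wa hnb
    obtain ⟨r, hr, e⟩ := hA γ hγ
    refine ⟨r⁻¹ * h * r, hcomm r hr h hhN, fun x => ?_⟩
    obtain ⟨b, y, hy⟩ := exists_cns ((r⁻¹ * h * r) (cns false x))
    cases b
    · exfalso
      have h2 : h (r (cns false x)) = r (cns false y) := by
        rw [← hy]; simp
      obtain ⟨z, hz⟩ := e x
      obtain ⟨w, hw⟩ := e y
      have hz1 := (hγU z).2
      have hw1 := (hγU w).1
      rw [← hz] at hz1
      rw [← hw, ← h2] at hw1
      exact Set.disjoint_left.1 hd hz1 hw1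
    · exact ⟨y, hy⟩
  -- commutators
  have hC : ∀ f ∈ R, ∀ g ∈ R, pair (f * (g * f⁻¹ * g⁻¹)) 1 ∈ N := by
    intro f hf g hg
    have hgN : pair g 1 * (h * (pair g 1)⁻¹ * h⁻¹) ∈ N := by
      have := N.mul_mem (hconj _ (hpair g 1 hg h1) h hhN) (N.inv_mem hhN)
      simpa [mul_assoc] using this
    set k : H := h * (pair g 1)⁻¹ * h⁻¹ with hk
    have hfix : ∀ x, (flip * k * flip⁻¹) (cns true x) = cns true x := by
      intro x
      have e1 : flip⁻¹ (cns true x) = cns false x := by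
        have : flip (cns false x) = cns true x := by simp
        rw [← this, inv_ap_self]
      have e2 : ∃ y, h⁻¹ (cns false x) = cns true y := by
        obtain ⟨b, y, hy⟩ := exists_cns (h⁻¹ (cns false x))
        cases b
        · exfalso
          obtain ⟨z, hz⟩ := hh y
          rw [← hy, self_ap_inv] at hz
          have := congrFun hz 0
          simp at this
        · exact ⟨y, hy⟩
      obtain ⟨y, hy⟩ := e2
      have e3 : k (cns false x) = cns false x := by
        simp only [hk, mul_ap, hy, pair_inv, pair_t, inv_one, one_ap]
        rw [← hy, self_ap_inv]
      simp [e1, e3]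
    obtain ⟨g', hg', -⟩ := exists_pair _ hfix
    have hk' : k = pair 1 g' := by
      rw [← flip_pair, ← hg']
      have : flip * flip = 1 := H_ext fun b x => by simp
      have : flip⁻¹ = flip := by rw [inv_eq_iff_mul_eq_one, this]
      rw [this]
      simp only [mul_assoc, ‹flip * flip = 1›, mul_one]
      rw [← mul_assoc, ‹flip * flip = 1›, one_mul]
    rw [hk'] at hgN
    have := N.mul_mem (hconj _ (hpair f 1 hf h1) _ hgN) (N.inv_mem hgN)
    simpa [pair_mul, pair_inv, mul_assoc] using this
  have hD : ∀ f ∈ R, pair (pair (pair f 1) 1) 1 ∈ N := by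
    intro f hf
    have hsw : swH f ∈ R := (hR _).2 ((hR f).1 hf).sw
    have h2 := hC (pair (swH f) 1) (hpair _ _ hsw h1) sH hs
    rw [swindle] at h2
    have h3 := hconj (pair (pair flip 1) 1) (hpair _ _ (hpair _ _ hflip h1) h1) _ h2
    rw [pair_inv, pair_inv, pair_mul, pair_mul, pair_mul, pair_mul, flip_pair] at h3
    simpa using h3
  -- elements fixing an open set
  have hB : ∀ e ∈ R, ∀ U : Set X, IsOpen U → U.Nonempty → (∀ x ∈ U, e x = x) → e ∈ N := by
    intro e he U hU ⟨u, hu⟩ hfix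
    obtain ⟨γ, hγ, hγU⟩ := exists_wa (hU.mem_nhds hu)
    obtain ⟨r, hr, er⟩ := hA γ hγ
    obtain ⟨p, hp, ep⟩ := hA [false, false, false] (by simp)
    have hp' : p * flip * r⁻¹ ∈ R := R.mul_mem (R.mul_mem hp hflip) (R.inv_mem hr)
    set q := p * flip * r⁻¹ with hq
    have hfx : ∀ x, (∀ y, x ≠ wordAppend [false, false, false] y) → (q * e * q⁻¹) x = x := by
      intro x hx
      obtain ⟨z, rfl⟩ : ∃ z, x = q (r z) := ⟨r⁻¹ (q⁻¹ x), by simp⟩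
      obtain ⟨b, z, rfl⟩ := exists_cns z
      cases b
      · obtain ⟨y, hy⟩ := er z
        have : e (r (cns false z)) = r (cns false z) := by
          rw [hy]; exact hfix _ (hγU y)
        simp [this]
      · exfalso
        obtain ⟨y, hy⟩ := ep z
        exact hx y (by rw [← hy]; simp [hq])
    have hq2 : q * e * q⁻¹ ∈ R := R.mul_mem (R.mul_mem hp' he) (R.inv_mem hp')
    obtain ⟨a, ha, wa⟩ := exists_pair (q * e * q⁻¹) (fun x => hfx _ fun y hy => by
      have := congrFun hy 0
      simp at this)
    rw [ha] at hfx
    obtain ⟨b, hb, wb⟩ := exists_pair a (fun x => by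
      have := hfx (cns false (cns true x)) fun y hy => by
        have := congrFun hy 1
        simp at this
      rw [pair_f] at this
      exact cns_inj this)
    rw [hb] at hfx
    obtain ⟨c, hc, wc⟩ := exists_pair b (fun x => by
      have := hfx (cns false (cns false (cns true x))) fun y hy => by
        have := congrFun (congrArg tl hy) 1
        simp at this
      rw [pair_f, pair_f] at this
      exact cns_inj (cns_inj this))
    have hcR : c ∈ R := (hR c).2 (wc (wb (wa ((hR _).1 hq2))))
    have h4 := hD c hcR
    rw [← hc, ← hb, ← ha] at h4
    have h5 := hcomm q hp' _ h4
    simpa [mul_assoc] using h5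
  -- every element is a product of two such
  intro f hf
  by_cases hf1 : f = 1
  · rw [hf1]; exact N.one_mem
  obtain ⟨x, hx⟩ : ∃ x, f x ≠ x := by
    by_contra hc
    push Not at hc
    exact hf1 (Homeomorph.ext hc)
  classical
  obtain ⟨z, hz⟩ := Infinite.exists_notMem_finset ({x, f x} : Finset X)
  simp only [Finset.mem_insert, Finset.mem_singleton, not_or] at hz
  have hO : IsOpen ({f x, z, f⁻¹ z}ᶜ : Set X) :=
    (Set.Finite.isClosed (by simp)).isOpen_compl
  have hxO : x ∈ ({f x, z, f⁻¹ z}ᶜ : Set X) := by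
    simp only [Set.mem_compl_iff, Set.mem_insert_iff, Set.mem_singleton_iff, not_or]
    refine ⟨Ne.symm hx, Ne.symm hz.1, fun hc => hz.2 ?_⟩
    rw [hc, self_ap_inv]
  obtain ⟨U, hUc, hxU, hUO⟩ := compact_exists_isClopen_in_isOpen hO hxO
  have hfxU : f x ∉ U := fun hc => by simpa using hUO hc
  have hzU : z ∉ U := fun hc => by simpa using hUO hc
  have hfzU : f⁻¹ z ∉ U := fun hc => by simpa using hUO hc
  let D : Set X := U ∩ f ⁻¹' Uᶜ
  have hDc : IsClopen D := hUc.inter (hUc.compl.preimage f.continuous)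
  let E : Set X := (f⁻¹ : H) ⁻¹' D
  have hEc : IsClopen E := hDc.preimage (f⁻¹ : H).continuous
  have hdis : ∀ y, y ∈ D → y ∉ E := by
    rintro y ⟨hy, -⟩ ⟨-, hy'⟩
    apply hy'
    simpa using hy
  let kf : X → X := fun y => if y ∈ D then f y else (if y ∈ E then f⁻¹ y else y)
  have kc : Continuous kf := by
    have h0 := cont_piece hDc f.continuous
      (cont_piece hEc (f⁻¹ : H).continuous (continuous_id' (X := X)))
    convert h0
  have kw : WR kf := by
    have h0 := WR.piece hDc ((hR f).1 hf)
      (WR.piece hEc ((hR _).1 (R.inv_mem hf)) WR.id')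
    convert h0
  have kE : ∀ y ∈ E, kf y = f⁻¹ y := fun y hy => by
    have : y ∉ D := fun h => hdis y h hy
    simp [kf, this, hy]
  have kD : ∀ y ∈ D, kf y = f y := fun y hy => by simp [kf, hy]
  have kfD : ∀ y ∈ D, f y ∈ E := fun y hy => by
    change f⁻¹ (f y) ∈ D
    simpa using hy
  have kk : ∀ y, kf (kf y) = y := by
    intro y
    by_cases hy : y ∈ D
    · rw [kD y hy, kE _ (kfD y hy), inv_ap_self]
    · by_cases hy' : y ∈ E
      · rw [kE y hy', kD _ hy', self_ap_inv]
      · have : kf y = y := by simp [kf, hy, hy']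
        rw [this, this]
  let k : H := ⟨⟨kf, kf, kk, kk⟩, kc, kc⟩
  have hkR : k ∈ R := (hR k).2 kw
  have hkN : k ∈ N := by
    refine hB k hkR (Dᶜ ∩ Eᶜ) (hDc.compl.isOpen.inter hEc.compl.isOpen)
      ⟨z, fun h => hzU h.1, fun h => hfzU h.1⟩ ?_
    rintro y ⟨hy, hy'⟩
    change kf y = y
    simp only [Set.mem_compl_iff] at hy hy'
    simp [kf, hy, hy']
  have hkf : k * f ∈ N := by
    refine hB (k * f) (R.mul_mem hkR hf) D hDc.isOpen ⟨x, hxU, hfxU⟩ ?_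
    intro y hy
    change kf (f y) = y
    rw [kE _ (kfD y hy), inv_ap_self]
  have := N.mul_mem (N.inv_mem hkN) hkf
  simpa using this

end RatSimple

/-!
Belk–Hyde–Matucci: the rational group `ℛ`, i.e. the group of rational
homeomorphisms of the Cantor space `ℕ → Bool` under composition, is simple.
-/
theorem rational_group_is_simple
    (R : Subgroup ((ℕ → Bool) ≃ₜ (ℕ → Bool)))
    (hR : ∀ f, f ∈ R ↔ IsRational f) :
    IsSimpleGroup ↥R := by
  have hR' : ∀ f, f ∈ R ↔ RatSimple.WR f := fun f =>
    (hR f).trans ⟨RatSimple.WR.of_rational f, RatSimple.WR.rational f⟩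
  have hflip : RatSimple.flip ∈ R := (hR' _).2 RatSimple.WR.flip
  refine { exists_pair_ne := ⟨⟨RatSimple.flip, hflip⟩, 1, ?_⟩, eq_bot_or_eq_top_of_normal := ?_ }
  · intro h
    have h1 : RatSimple.flip = 1 := congrArg Subtype.val h
    have h2 := congrFun (congrArg (fun f : RatSimple.H => f (fun _ => true)) h1) 0
    exact Bool.false_ne_true h2
  · intro N hN
    by_cases hb : N = ⊥
    · exact Or.inl hb
    right
    have key := RatSimple.main_aux R (N.map R.subtype) hR' (Subgroup.map_subtype_le N) ?_ ?_
    · rw [eq_top_iff]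
      rintro ⟨f, hf⟩ -
      obtain ⟨g, hg, e⟩ := key hf
      have : g = ⟨f, hf⟩ := Subtype.ext e
      rwa [← this]
    · rintro r hr _ ⟨n, hn, rfl⟩
      exact ⟨_, hN.conj_mem n hn ⟨r, hr⟩, rfl⟩
    · intro h
      apply hb
      exact (Subgroup.map_eq_bot_iff_of_injective N R.subtype_injective).1 h
end

section
/- Belk–Hyde–Matucci: The rational group ℛ, i.e. the group of rational homeomorphisms of the Cantor space 𝔠 under composition, is not finitely generated. -/
open PiNat in
/-- asymptotic slope of `f` at the point `x`. -/
def HasSlope (f : (ℕ → Bool) → (ℕ → Bool)) (x : ℕ → Bool) (s : ℚ) : Prop :=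
  ∃ C : ℚ, ∀ y, y ≠ x → |(firstDiff (f x) (f y) : ℚ) - s * (firstDiff x y : ℚ)| ≤ C

def splice (n : ℕ) (x y : ℕ → Bool) : ℕ → Bool := fun m => if m < n then x m else y (m - n)

def EvPer (x : ℕ → Bool) (q : ℕ) : Prop := 0 < q ∧ ∃ n0, ∀ n, n0 ≤ n → x (n + q) = x n

noncomputable def per (x : ℕ → Bool) : ℕ := sInf {q | EvPer x q}

lemma per_spec {x : ℕ → Bool} (h : ∃ q, EvPer x q) : EvPer x (per x) :=
  Nat.sInf_mem (s := {q | EvPer x q}) h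

lemma per_dvd {x : ℕ → Bool} {q : ℕ} (h : EvPer x q) : per x ∣ q := by
  have hp := per_spec ⟨q, h⟩
  by_contra hnd
  have hpos : 0 < q % per x := Nat.pos_of_ne_zero fun h0 => hnd (Nat.dvd_of_mod_eq_zero h0)
  have hlt : q % per x < per x := Nat.mod_lt _ hp.1
  obtain ⟨_, a, ha⟩ := hp
  obtain ⟨_, b, hb⟩ := h
  have key : ∀ k n, a ≤ n → x (n + per x * k) = x n := by
    intro k
    induction k with
    | zero => intro n _; simp
    | succ k ih =>
      intro n hn
      rw [Nat.mul_succ, ← Nat.add_assoc, ha _ (by omega), ih n hn]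
  have hE : EvPer x (q % per x) := by
    refine ⟨hpos, max a b, fun n hn => ?_⟩
    have h1 := key (q / per x) (n + q % per x) (by omega)
    rw [Nat.add_assoc, Nat.mod_add_div, hb n (by omega)] at h1
    exact h1.symm
  have : per x ≤ q % per x := Nat.sInf_le hE
  omega

lemma firstDiff_eq {x y : ℕ → Bool} {n : ℕ} (h : x n ≠ y n) (h' : ∀ m < n, x m = y m) :
    PiNat.firstDiff x y = n := by
  have hne : x ≠ y := fun e => h (by rw [e])
  have h1 := PiNat.apply_firstDiff_ne hne
  rcases lt_trichotomy (PiNat.firstDiff x y) n with hl | hl | hl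
  · exact absurd (h' _ hl) h1
  · exact hl
  · exact absurd (PiNat.apply_eq_of_lt_firstDiff hl) h

lemma HasSlope.unique {f : (ℕ → Bool) → (ℕ → Bool)} {x : ℕ → Bool} {s t : ℚ}
    (hs : HasSlope f x s) (ht : HasSlope f x t) : s = t := by
  obtain ⟨C, hC⟩ := hs
  obtain ⟨D, hD⟩ := ht
  by_contra hne
  have hpos : 0 < |s - t| := abs_pos.mpr (sub_ne_zero.mpr hne)
  obtain ⟨n, hn⟩ := exists_nat_gt ((C + D) / |s - t|)
  rw [div_lt_iff₀ hpos] at hn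
  have hy : Function.update x n (!x n) ≠ x := by
    intro e
    have := congrFun e n
    simp at this
  have hfd : PiNat.firstDiff x (Function.update x n (!x n)) = n := by
    apply firstDiff_eq
    · simp
    · intro m hm
      rw [Function.update_of_ne hm.ne]
  have h1 := hC _ hy
  have h2 := hD _ hy
  rw [hfd] at h1 h2
  have h3 : |(s - t) * (n : ℚ)| ≤ C + D := by
    rw [abs_le] at *
    constructor <;> linarith [h1.1, h1.2, h2.1, h2.2]
  rw [abs_mul, Nat.abs_cast] at h3
  linarith

lemma HasSlope.comp {f g : (ℕ → Bool) → (ℕ → Bool)} {x : ℕ → Bool} {s t : ℚ}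
    (hinj : Function.Injective f)
    (hs : HasSlope f x s) (ht : HasSlope g (f x) t) : HasSlope (fun z => g (f z)) x (t * s) := by
  obtain ⟨C, hC⟩ := hs
  obtain ⟨D, hD⟩ := ht
  refine ⟨D + |t| * C, fun y hy => ?_⟩
  have h1 := hC y hy
  have h2 := hD (f y) (hinj.ne hy)
  have h3 := mul_le_mul_of_nonneg_left h1 (abs_nonneg t)
  rw [← abs_mul] at h3
  calc _ = |((PiNat.firstDiff (g (f x)) (g (f y)) : ℚ) - t * (PiNat.firstDiff (f x) (f y) : ℚ)) +
        t * ((PiNat.firstDiff (f x) (f y) : ℚ) - s * (PiNat.firstDiff x y : ℚ))| := by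
        congr 1; ring
    _ ≤ _ := (abs_add_le _ _).trans (add_le_add h2 h3)

lemma HasSlope.one (x : ℕ → Bool) : HasSlope (fun z => z) x 1 :=
  ⟨0, fun y _ => by simp⟩

lemma splice_firstDiff {x w : ℕ → Bool} {a c : ℕ} (hx : ∀ n, a ≤ n → x (n + c) = x n)
    (hne : x ≠ splice a x w) :
    PiNat.firstDiff x (splice (a + c) x w) = PiNat.firstDiff x (splice a x w) + c := by
  have h1 := PiNat.apply_firstDiff_ne hne
  have h2 : ∀ m < PiNat.firstDiff x (splice a x w), x m = splice a x w m :=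
    fun m hm => PiNat.apply_eq_of_lt_firstDiff hm
  generalize PiNat.firstDiff x (splice a x w) = k at h1 h2 ⊢
  have hk : a ≤ k := by
    by_contra hlt
    apply h1
    simp [splice, not_le.mp hlt]
  have hs : ∀ n, a ≤ n → splice (a + c) x w (n + c) = splice a x w n := by
    intro n hn
    simp only [splice]
    rw [if_neg (by omega), if_neg (by omega)]
    congr 1; omega
  apply firstDiff_eq
  · rw [hs k hk, hx k hk]; exact h1
  · intro m hm
    by_cases hm' : m < a + c
    · simp [splice, hm']
    · obtain ⟨n, rfl⟩ : ∃ n, m = n + c := ⟨m - c, by omega⟩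
      rw [hs n (by omega), hx n (by omega)]
      exact h2 n (by omega)

lemma wordAppend_ofFn (x y : ℕ → Bool) (n : ℕ) :
    wordAppend (List.ofFn (fun i : Fin n => x i)) y = splice n x y := by
  funext m
  simp [wordAppend, splice]

/-- existence of local actions -/
lemma exists_local (f : (ℕ → Bool) ≃ₜ (ℕ → Bool)) (x : ℕ → Bool) (n : ℕ) :
    ∃ (m : ℕ) (g : (ℕ → Bool) → (ℕ → Bool)),
      IsLocalAction f (List.ofFn (fun i : Fin n => x i)) g ∧
      (∀ y, f (splice n x y) = splice m (f x) (g y)) ∧ ∃ y z, g y 0 ≠ g z 0 := by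
  classical
  have hex : ∃ m, ∃ y z, f (splice n x y) m ≠ f (splice n x z) m := by
    by_contra hcon
    push Not at hcon
    have h1 : f (splice n x fun _ => true) = f (splice n x fun _ => false) :=
      funext fun m => hcon m _ _
    have h2 := congrFun (f.injective h1) n
    simp [splice] at h2
  obtain ⟨m, hm, hlt⟩ : ∃ m, (∃ y z, f (splice n x y) m ≠ f (splice n x z) m) ∧
      ∀ k < m, ∀ y z, f (splice n x y) k = f (splice n x z) k := by
    refine ⟨Nat.find hex, Nat.find_spec hex, fun k hk => ?_⟩
    have := Nat.find_min hex hk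
    push Not at this
    exact this
  have hx : splice n x (fun i => x (i + n)) = x := by
    funext k
    simp only [splice]
    split_ifs with h
    · rfl
    · congr 1; omega
  have hmain : ∀ y, f (splice n x y) = splice m (f x) (fun i => f (splice n x y) (i + m)) := by
    intro y
    funext k
    simp only [splice]
    split_ifs with h
    · have := hlt k h y (fun i => x (i + n))
      rw [hx] at this
      exact this
    · rw [Nat.sub_add_cancel (not_lt.mp h)]
  have hnc : ∃ y z, (fun i => f (splice n x y) (i + m)) 0 ≠ (fun i => f (splice n x z) (i + m)) 0 := by
    simpa using hm
  refine ⟨m, fun y i => f (splice n x y) (i + m), ⟨List.ofFn (fun i : Fin m => f x i), ?_, hnc⟩,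
    hmain, hnc⟩
  intro y
  rw [wordAppend_ofFn, wordAppend_ofFn]
  exact hmain y

lemma bounded_near (f : (ℕ → Bool) ≃ₜ (ℕ → Bool)) (x : ℕ → Bool) (M : ℕ) :
    ∃ C : ℕ, ∀ y, y ≠ x → PiNat.firstDiff x y < M → PiNat.firstDiff (f x) (f y) ≤ C := by
  have hopen : IsOpen (f.symm ⁻¹' (PiNat.cylinder x M)) :=
    (PiNat.isOpen_cylinder _ x M).preimage f.symm.continuous
  have hmem : f x ∈ f.symm ⁻¹' (PiNat.cylinder x M) := by
    simp [PiNat.self_mem_cylinder]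
  obtain ⟨v, ⟨z, n, rfl⟩, hv, hsub⟩ :=
    (PiNat.isTopologicalBasis_cylinders (fun _ => Bool)).exists_subset_of_mem_open hmem hopen
  refine ⟨n, fun y hy hlt => ?_⟩
  by_contra hcon
  push Not at hcon
  have h1 : f y ∈ PiNat.cylinder z n := by
    intro i hi
    rw [← hv i hi]
    exact (PiNat.apply_eq_of_lt_firstDiff (hi.trans hcon)).symm
  have h2 := hsub h1
  simp only [Set.mem_preimage, Homeomorph.symm_apply_apply] at h2
  exact PiNat.apply_firstDiff_ne hy.symm (h2 _ hlt).symm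

lemma slope_of_loop (f : (ℕ → Bool) ≃ₜ (ℕ → Bool)) (x : ℕ → Bool) (a c b d : ℕ) (hc : 0 < c)
    (g : (ℕ → Bool) → (ℕ → Bool))
    (hx : ∀ n, a ≤ n → x (n + c) = x n)
    (h1 : ∀ y, f (splice a x y) = splice b (f x) (g y))
    (h2 : ∀ y, f (splice (a + c) x y) = splice (b + d) (f x) (g y)) 
    (hfx : ∀ n, b ≤ n → f x (n + d) = f x n) : HasSlope f x (d / c) := by
  obtain ⟨C, hC⟩ := bounded_near f x (a + c)
  have hc' : (0 : ℚ) < c := by exact_mod_cast hc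
  refine ⟨C + (d / c) * (a + c), fun y hy => ?_⟩
  induction hN : PiNat.firstDiff x y using Nat.strong_induction_on generalizing y with
  | _ N ih =>
    subst hN
    by_cases hlt : PiNat.firstDiff x y < a + c
    · have h3 : (PiNat.firstDiff (f x) (f y) : ℚ) ≤ C := by exact_mod_cast hC y hy hlt
      have h4 : (PiNat.firstDiff x y : ℚ) ≤ a + c := by exact_mod_cast hlt.le
      have h5 : (0 : ℚ) ≤ d / c := by positivity
      have h6 := mul_le_mul_of_nonneg_left h4 h5
      have h7 : (0 : ℚ) ≤ (d / c) * (PiNat.firstDiff x y : ℚ) := by positivity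
      have h8 : (0 : ℚ) ≤ (PiNat.firstDiff (f x) (f y) : ℚ) := by positivity
      have h9 : (0 : ℚ) ≤ C := by positivity
      rw [abs_le]
      constructor <;> linarith
    · obtain ⟨w, hw⟩ : ∃ w, y = splice (a + c) x w := by
        refine ⟨fun i => y (i + (a + c)), funext fun k => ?_⟩
        simp only [splice]
        split_ifs with h
        · exact (PiNat.apply_eq_of_lt_firstDiff (by omega)).symm
        · congr 1; omega
      have hne : x ≠ splice a x w := by
        intro e
        apply hy
        rw [hw]
        funext k
        simp only [splice]
        split_ifs with h
        · rfl
        · have e1 := congrFun e (k - c)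
          simp only [splice] at e1
          rw [if_neg (by omega), ← hx _ (by omega)] at e1
          rw [show k - (a + c) = k - c - a by omega, ← e1]
          congr 1; omega
      have e1 := splice_firstDiff hx hne
      have e2 := splice_firstDiff (x := f x) (w := g w) hfx (by
        rw [← h1]; exact f.injective.ne hne)
      rw [← h1, ← h2, ← hw] at e2
      rw [← hw] at e1
      have := ih _ (by omega) (splice a x w) hne.symm rfl
      rw [e1, e2]
      push_cast
      convert this using 2
      field_simp
      ring

lemma slope_of_rational (f : (ℕ → Bool) ≃ₜ (ℕ → Bool)) (hf : IsRational f) (N : ℕ)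
    (hN : {g | ∃ α, IsLocalAction f α g}.ncard ≤ N) (x : ℕ → Bool) (hx : ∃ q, EvPer x q) :
    (∃ q, EvPer (f x) q) ∧ ∃ k j : ℕ, 0 < k ∧ k ≤ N ∧ 0 < j ∧
      HasSlope f x ((j * per (f x) : ℚ) / (k * per x)) := by
  obtain ⟨hq, n0, hper⟩ := per_spec hx
  set q := per x with hqdef
  choose m g hg1 hg2 hg3 using exists_local f x
  have hf' : {g | ∃ α, IsLocalAction f α g}.Finite := hf
  have hpig : ∃ i ∈ Finset.range (N + 1), ∃ i' ∈ Finset.range (N + 1), i ≠ i' ∧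
      g (n0 + i * q) = g (n0 + i' * q) := by
    apply Finset.exists_ne_map_eq_of_card_lt_of_maps_to (t := hf'.toFinset)
    · rw [← Set.ncard_eq_toFinset_card _ hf']
      simpa using Nat.lt_succ_of_le hN
    · intro i _
      exact (Set.Finite.mem_toFinset hf').mpr ⟨_, hg1 _⟩
  obtain ⟨i, k, hk, hkN, hgk⟩ : ∃ i k, 0 < k ∧ k ≤ N ∧
      g (n0 + i * q) = g (n0 + (i + k) * q) := by
    obtain ⟨i, hi, i', hi', hne, he⟩ := hpig
    simp only [Finset.mem_range] at hi hi'
    rcases lt_or_gt_of_ne hne with hl | hl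
    · exact ⟨i, i' - i, by omega, by omega, by rw [he]; congr 3; omega⟩
    · exact ⟨i', i - i', by omega, by omega, by rw [← he]; congr 3; omega⟩
  have hperk : ∀ k n, n0 ≤ n → x (n + k * q) = x n := by
    intro k
    induction k with
    | zero => intro n _; simp
    | succ k ih =>
      intro n hn
      rw [Nat.succ_mul, ← Nat.add_assoc, hper _ (by omega), ih n hn]
  set a := n0 + i * q with ha
  set c := k * q with hcdef
  have hac : n0 + (i + k) * q = a + c := by rw [ha, hcdef]; ring
  rw [hac] at hgk
  have hc : 0 < c := Nat.mul_pos hk hq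
  have hxc : ∀ n, a ≤ n → x (n + c) = x n := fun n hn => hperk k n (by omega)
  have h1 := hg2 a
  have h2 := hg2 (a + c)
  rw [← hgk] at h2
  set b := m a
  have hnc := hg3 a
  set G := g a
  have hsp : ∀ y, splice (a + c) x y = splice a x (splice c (fun i => x (i + a)) y) := by
    intro y
    funext k
    simp only [splice]
    split_ifs with h1 h2 h3 h4 h5
    · rfl
    · congr 1; omega
    · omega
    · omega
    · omega
    · congr 1; omega
  have hlt : b < m (a + c) := by
    rcases lt_trichotomy b (m (a + c)) with h | h | h
    · exact h
    · exfalso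
      have e : splice (a + c) x (fun _ => !x a) = splice a x (fun _ => !x a) := by
        apply f.injective
        rw [h1, h2, h]
      have e1 := congrFun e a
      simp [splice, hc] at e1
    · exfalso
      obtain ⟨y, z, hyz⟩ := hnc
      have key : ∀ y, G y 0 = f x (m (a + c)) := by
        intro y
        have e := congrFun (h2 y) (m (a + c))
        rw [hsp y, h1] at e
        simp [splice, h] at e
        exact e.symm
      exact hyz ((key y).trans (key z).symm)
  obtain ⟨d, hd⟩ := Nat.exists_eq_add_of_lt hlt
  rw [show m (a + c) = b + (d + 1) by omega] at h2
  have hx1 : splice a x (fun i => x (i + a)) = x := by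
    funext k
    simp only [splice]
    split_ifs with h
    · rfl
    · congr 1; omega
  have hx2 : splice (a + c) x (fun i => x (i + a)) = x := by
    funext k
    simp only [splice]
    split_ifs with h
    · rfl
    · rw [← hxc _ (by omega)]; congr 1; omega
  have hfx : ∀ n, b ≤ n → f x (n + (d + 1)) = f x n := by
    intro n hn
    have e1 := congrFun (h1 (fun i => x (i + a))) n
    have e2 := congrFun (h2 (fun i => x (i + a))) (n + (d + 1))
    rw [hx1] at e1
    rw [hx2] at e2
    simp only [splice] at e1 e2
    rw [if_neg (by omega)] at e1 e2
    rw [e1, e2]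
    congr 1; omega
  have hE : EvPer (f x) (d + 1) := ⟨by omega, b, hfx⟩
  refine ⟨⟨_, hE⟩, ?_⟩
  have hS := slope_of_loop f x a c b (d + 1) hc G hxc h1 h2 hfx
  obtain ⟨j, hj⟩ := per_dvd hE
  refine ⟨k, j, hk, hkN, ?_, ?_⟩
  · rcases Nat.eq_zero_or_pos j with h | h
    · rw [h] at hj; omega
    · exact h
  · convert hS using 2
    · rw [hj]; push_cast; ring
    · rw [hcdef]; push_cast; ring

def SlopeInv (p : ℕ) (f : (ℕ → Bool) ≃ₜ (ℕ → Bool)) : Prop :=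
  ∀ x, (∃ q, EvPer x q) → (∃ q, EvPer (f x) q) ∧ ∃ a b : ℕ, ¬ p ∣ a ∧ ¬ p ∣ b ∧
    HasSlope f x ((a * per (f x) : ℚ) / (b * per x))

lemma slopeInv_of_rational (p N : ℕ) (hp : p.Prime) (hpN : N < p)
    (f : (ℕ → Bool) ≃ₜ (ℕ → Bool)) (hf : IsRational f) (hf' : IsRational f.symm)
    (hN : {g | ∃ α, IsLocalAction f α g}.ncard ≤ N)
    (hN' : {g | ∃ α, IsLocalAction f.symm α g}.ncard ≤ N) : SlopeInv p f := by
  intro x hx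
  obtain ⟨h1, k, j, hk, hkN, hj, hs⟩ := slope_of_rational f hf N hN x hx
  obtain ⟨h1', k', j', hk', hkN', hj', hs'⟩ := slope_of_rational f.symm hf' N hN' (f x) h1
  rw [Homeomorph.symm_apply_apply] at hs'
  have hcomp := hs.comp f.injective hs'
  simp only [Homeomorph.symm_apply_apply] at hcomp
  have hone := hcomp.unique (HasSlope.one x)
  have p1 : (0 : ℚ) < per x := by exact_mod_cast (per_spec hx).1
  have p2 : (0 : ℚ) < per (f x) := by exact_mod_cast (per_spec h1).1
  have q1 : (0 : ℚ) < k := by exact_mod_cast hk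
  have q2 : (0 : ℚ) < k' := by exact_mod_cast hk'
  have heq : (j' : ℚ) * j = k' * k := by
    field_simp at hone
    linarith
  have heq' : j' * j = k' * k := by exact_mod_cast heq
  have n1 : ¬ p ∣ k := fun h => by have := Nat.le_of_dvd hk h; omega
  have n2 : ¬ p ∣ k' := fun h => by have := Nat.le_of_dvd hk' h; omega
  refine ⟨h1, j, k, ?_, n1, hs⟩
  intro h
  have : p ∣ k' * k := heq' ▸ Dvd.dvd.mul_left h j'
  rcases hp.dvd_mul.mp this with h | h
  · exact n2 h
  · exact n1 h

lemma slopeInv_mul (p : ℕ) (hp : p.Prime) (f g : (ℕ → Bool) ≃ₜ (ℕ → Bool))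
    (hf : SlopeInv p f) (hg : SlopeInv p g) : SlopeInv p (f * g) := by
  intro x hx
  obtain ⟨h1, a, b, ha, hb, hs⟩ := hg x hx
  obtain ⟨h2, a', b', ha', hb', hs'⟩ := hf (g x) h1
  refine ⟨h2, a' * a, b' * b, hp.not_dvd_mul ha' ha, hp.not_dvd_mul hb' hb, ?_⟩
  have h := hs.comp g.injective hs'
  have p1 : (0 : ℚ) < per x := by exact_mod_cast (per_spec hx).1
  have p2 : (0 : ℚ) < per (g x) := by exact_mod_cast (per_spec h1).1
  have q1 : (b : ℚ) ≠ 0 := by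
    rintro h; apply hb; rw [Nat.cast_eq_zero.mp h]; exact dvd_zero p
  have q2 : (b' : ℚ) ≠ 0 := by
    rintro h; apply hb'; rw [Nat.cast_eq_zero.mp h]; exact dvd_zero p
  have e : ((a' * a : ℕ) * per ((f * g) x) : ℚ) / ((b' * b : ℕ) * per x) =
      (a' * per (f (g x)) : ℚ) / (b' * per (g x)) * ((a * per (g x) : ℚ) / (b * per x)) := by
    change ((a' * a : ℕ) * per (f (g x)) : ℚ) / ((b' * b : ℕ) * per x) = _
    push_cast
    field_simp
  rw [e]
  exact h

lemma slopeInv_one (p : ℕ) (hp : p.Prime) : SlopeInv p 1 := by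
  intro x hx
  refine ⟨hx, 1, 1, hp.not_dvd_one, hp.not_dvd_one, ?_⟩
  have p1 : (0 : ℚ) < per x := by exact_mod_cast (per_spec hx).1
  have e : ((1 : ℕ) * per ((1 : (ℕ → Bool) ≃ₜ (ℕ → Bool)) x) : ℚ) / ((1 : ℕ) * per x) = 1 := by
    change ((1 : ℕ) * per x : ℚ) / ((1 : ℕ) * per x) = 1
    field_simp
  rw [e]
  exact HasSlope.one x

/-- The sequence of period `p`. -/
def cseq (p : ℕ) : ℕ → Bool := fun n => decide (p ∣ n)

/-- Translation by the sequence of period `p`. -/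
def xorHomeo (p : ℕ) : (ℕ → Bool) ≃ₜ (ℕ → Bool) where
  toFun x := fun n => xor (x n) (cseq p n)
  invFun x := fun n => xor (x n) (cseq p n)
  left_inv x := by funext n; simp
  right_inv x := by funext n; simp
  continuous_toFun := continuous_pi fun n =>
    (continuous_of_discreteTopology (f := fun b : Bool => xor b (cseq p n))).comp
      (continuous_apply n)
  continuous_invFun := continuous_pi fun n =>
    (continuous_of_discreteTopology (f := fun b : Bool => xor b (cseq p n))).comp
      (continuous_apply n)

lemma xorHomeo_apply (p : ℕ) (x : ℕ → Bool) (n : ℕ) :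
    xorHomeo p x n = xor (x n) (cseq p n) := rfl

lemma xorHomeo_rational (p : ℕ) (hp : 0 < p) : IsRational (xorHomeo p) := by
  apply Set.Finite.subset
    ((Finset.range p).finite_toSet.image (fun i (x : ℕ → Bool) n => xor (x n) (cseq p (i + n))))
  rintro g ⟨α, β, h, y, z, hyz⟩
  have key : ∀ x n, xor (wordAppend α x n) (cseq p n) = wordAppend β (g x) n := fun x n => by
    rw [← h]; rfl
  have hlen : β.length = α.length := by
    rcases lt_trichotomy β.length α.length with hl | hl | hl
    · exfalso
      have e1 := key y β.length
      have e2 := key z β.length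
      simp [wordAppend, hl] at e1 e2
      exact hyz (e1.symm.trans e2)
    · exact hl
    · exfalso
      have e1 := key (fun _ => true) α.length
      have e2 := key (fun _ => false) α.length
      simp only [wordAppend, hl, lt_irrefl, dite_true, dite_false] at e1 e2
      rw [← e2] at e1
      simp at e1
  refine ⟨α.length % p, by simpa using Nat.mod_lt _ hp, ?_⟩
  funext x n
  have e := key x (α.length + n)
  simp [wordAppend, hlen] at e
  rw [← e]
  have : cseq p (α.length % p + n) = cseq p (α.length + n) := by
    simp only [cseq, decide_eq_decide, Nat.dvd_iff_mod_eq_zero, Nat.mod_add_mod]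
  simp [this]

lemma xorHomeo_slope (p : ℕ) (x : ℕ → Bool) : HasSlope (xorHomeo p) x 1 := by
  refine ⟨0, fun y hy => ?_⟩
  have : PiNat.firstDiff (xorHomeo p x) (xorHomeo p y) = PiNat.firstDiff x y := by
    apply firstDiff_eq
    · have := PiNat.apply_firstDiff_ne hy.symm
      simpa [xorHomeo_apply] using this
    · intro m hm
      rw [xorHomeo_apply, xorHomeo_apply, PiNat.apply_eq_of_lt_firstDiff hm]
  rw [this]
  simp

lemma per_zero : per (fun _ => false) = 1 := by
  have h : EvPer (fun _ => false) 1 := ⟨one_pos, 0, fun _ _ => rfl⟩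
  exact Nat.dvd_one.mp (per_dvd h)

lemma per_cseq (p : ℕ) (hp : p.Prime) : per (cseq p) = p := by
  have h : EvPer (cseq p) p := ⟨hp.pos, 0, fun n _ => by simp [cseq]⟩
  rcases (Nat.dvd_prime hp).mp (per_dvd h) with h1 | h1
  · exfalso
    obtain ⟨_, n0, hn⟩ := per_spec ⟨p, h⟩
    rw [h1] at hn
    have := hn (p * n0) (Nat.le_mul_of_pos_left _ hp.pos)
    simp [cseq] at this
    exact hp.ne_one (Nat.dvd_one.mp ((Nat.dvd_add_right (Dvd.intro _ rfl)).mp this))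
  · exact h1

lemma not_slopeInv_xor (p : ℕ) (hp : p.Prime) : ¬ SlopeInv p (xorHomeo p) := by
  intro h
  obtain ⟨_, a, b, ha, hb, hs⟩ := h (fun _ => false) ⟨1, one_pos, 0, fun _ _ => rfl⟩
  have e : xorHomeo p (fun _ => false) = cseq p := by
    funext n; simp [xorHomeo_apply]
  have h1 := hs.unique (xorHomeo_slope p _)
  rw [e, per_zero, per_cseq p hp] at h1
  have q1 : (b : ℚ) ≠ 0 := by
    rintro h; apply hb; rw [Nat.cast_eq_zero.mp h]; exact dvd_zero p
  rw [div_eq_one_iff_eq (by simpa using q1)] at h1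
  have h2 : a * p = b * 1 := by exact_mod_cast h1
  exact hb ⟨a, by linarith⟩

/-!
Belk–Hyde–Matucci: the rational group `ℛ`, i.e. the group of rational
homeomorphisms of the Cantor space `ℕ → Bool` under composition, is not
finitely generated.
-/
theorem rational_group_not_finitely_generated
    (R : Subgroup ((ℕ → Bool) ≃ₜ (ℕ → Bool)))
    (hR : ∀ f, f ∈ R ↔ IsRational f) :
    ¬ Group.FG ↥R := by
  intro hfg
  obtain ⟨S, hS, hfin⟩ := (Subgroup.fg_iff R).mp ((Group.fg_iff_subgroup_fg R).mp hfg)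
  have hSR : ∀ s ∈ S, s ∈ R := fun s hs => hS ▸ Subgroup.subset_closure hs
  obtain ⟨N, hN⟩ := (hfin.image (fun f : (ℕ → Bool) ≃ₜ (ℕ → Bool) =>
    max {g | ∃ α, IsLocalAction f α g}.ncard {g | ∃ α, IsLocalAction f.symm α g}.ncard)).bddAbove
  obtain ⟨p, hpN, hp⟩ := Nat.exists_infinite_primes (N + 1)
  have hgen : ∀ f ∈ S, SlopeInv p f ∧ SlopeInv p f⁻¹ := by
    intro f hf
    have hb := hN ⟨f, hf, rfl⟩
    simp only [max_le_iff] at hb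
    have h1 : IsRational f := (hR f).mp (hSR f hf)
    have h2 : IsRational f.symm := (hR _).mp (R.inv_mem (hSR f hf))
    exact ⟨slopeInv_of_rational p N hp hpN f h1 h2 hb.1 hb.2,
      slopeInv_of_rational p N hp hpN f.symm h2 h1 hb.2 hb.1⟩
  have hall : ∀ f ∈ Subgroup.closure S, SlopeInv p f ∧ SlopeInv p f⁻¹ := by
    intro f hf
    induction hf using Subgroup.closure_induction with
    | mem x hx => exact hgen x hx
    | one => exact ⟨slopeInv_one p hp, by rw [inv_one]; exact slopeInv_one p hp⟩
    | mul x y _ _ hx hy =>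
      refine ⟨slopeInv_mul p hp x y hx.1 hy.1, ?_⟩
      rw [mul_inv_rev]
      exact slopeInv_mul p hp _ _ hy.2 hx.2
    | inv x _ hx => exact ⟨hx.2, by rw [inv_inv]; exact hx.1⟩
  apply not_slopeInv_xor p hp
  refine (hall _ ?_).1
  rw [hS, hR]
  exact xorHomeo_rational p hp.pos
end

section
/- Belk–Bleak–Matucci: Every hyperbolic group embeds in the rational group ℛ; that is, if G is a hyperbolic group then there exists an injective group homomorphism from G into the group ℛ of rational homeomorphisms of the Cantor space 𝔠. -/
/-- The word length of `g` with respect to a generating set `S`: the least `k` such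
that `g` is a product of `k` elements of `S ∪ S⁻¹`. -/
noncomputable def wordNorm {G : Type*} [Group G] (S : Set G) (g : G) : ℕ :=
  sInf {k | ∃ l : List G, l.length = k ∧ (∀ x ∈ l, x ∈ S ∨ x⁻¹ ∈ S) ∧ l.prod = g}

/-- The word metric on `G` with respect to `S`. -/
noncomputable def wordDist {G : Type*} [Group G] (S : Set G) (g h : G) : ℕ :=
  wordNorm S (g⁻¹ * h)

/-- The Gromov product `(x|y)_w = ½(d(x,w) + d(y,w) − d(x,y))` with respect to the
word metric for `S`. -/
noncomputable def gromovProd {G : Type*} [Group G] (S : Set G) (w x y : G) : ℝ :=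
  ((wordDist S x w : ℝ) + (wordDist S y w : ℝ) - (wordDist S x y : ℝ)) / 2

/-- A group is hyperbolic if it has a finite generating set `S` and a `δ ≥ 0` such
that `(x|y)_w ≥ min((x|z)_w, (z|y)_w) − δ` for all `w, x, y, z`. -/
def IsHyperbolic (G : Type*) [Group G] : Prop :=
  ∃ S : Finset G, Subgroup.closure (S : Set G) = ⊤ ∧
    ∃ δ : ℝ, 0 ≤ δ ∧ ∀ w x y z : G,
      min (gromovProd (S : Set G) w x z) (gromovProd (S : Set G) w z y) - δ ≤
        gromovProd (S : Set G) w x y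

namespace HypRat

/-- Agreement of two sequences below `t`. -/
def Ag {A : Type*} (t : ℕ) (x y : ℕ → A) : Prop := ∀ i < t, x i = y i

lemma wa_lt {A : Type*} (α : List A) (x : ℕ → A) {i : ℕ} (h : i < α.length) :
    wordAppend α x i = α[i] := by
  simp [wordAppend, h]

lemma wa_add {A : Type*} (α : List A) (x : ℕ → A) (i : ℕ) :
    wordAppend α x (α.length + i) = x i := by
  simp [wordAppend]

lemma wa_nil {A : Type*} (x : ℕ → A) : wordAppend [] x = x := by
  funext i; simp [wordAppend]

lemma wa_append {A : Type*} (α β : List A) (x : ℕ → A) :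
    wordAppend (α ++ β) x = wordAppend α (wordAppend β x) := by
  funext i
  by_cases h : i < α.length
  · rw [wa_lt _ _ h, wa_lt _ _ (by simp; omega)]
    rw [List.getElem_append_left h]
  · obtain ⟨j, rfl⟩ := Nat.exists_eq_add_of_le (not_lt.mp h)
    rw [wa_add]
    by_cases h2 : j < β.length
    · rw [wa_lt _ _ h2, wa_lt _ _ (by simp; omega)]
      rw [List.getElem_append_right (by omega)]
      simp
    · obtain ⟨k, rfl⟩ := Nat.exists_eq_add_of_le (not_lt.mp h2)
      rw [wa_add]
      have := wa_add (α ++ β) x k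
      rw [List.length_append, add_assoc] at this
      exact this

lemma wa_inj {A : Type*} {α : List A} {x y : ℕ → A} (h : wordAppend α x = wordAppend α y) :
    x = y := by
  funext i
  have := congrFun h (α.length + i)
  simpa [wa_add] using this

lemma wa_pre {A : Type*} {α β : List A} {x y : ℕ → A}
    (h : wordAppend α x = wordAppend β y) (hl : α.length ≤ β.length) : α <+: β := by
  rw [List.prefix_iff_getElem]
  refine ⟨hl, fun i hi => ?_⟩
  have := congrFun h i
  rwa [wa_lt _ _ hi, wa_lt _ _ (hi.trans_le hl)] at this

lemma wa_cont {A : Type*} [TopologicalSpace A] (α : List A) :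
    Continuous (wordAppend α : (ℕ → A) → (ℕ → A)) := by
  refine continuous_pi fun i => ?_
  by_cases h : i < α.length
  · simp only [wa_lt _ _ h]; exact continuous_const
  · obtain ⟨j, rfl⟩ := Nat.exists_eq_add_of_le (not_lt.mp h)
    simp only [wa_add]; exact continuous_apply j

/-- first `M` entries -/
def take {A : Type*} (M : ℕ) (x : ℕ → A) : List A := List.ofFn fun i : Fin M => x i

lemma take_length {A : Type*} (M : ℕ) (x : ℕ → A) : (take M x).length = M := by simp [take]

lemma take_ag {A : Type*} {M : ℕ} {x y : ℕ → A} (h : Ag M y x) :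
    ∃ z, y = wordAppend (take M x) z := by
  refine ⟨fun i => y (M + i), ?_⟩
  funext i
  by_cases hi : i < M
  · rw [wa_lt _ _ (by rwa [take_length]), h i hi]; simp [take]
  · obtain ⟨j, rfl⟩ := Nat.exists_eq_add_of_le (not_lt.mp hi)
    have := wa_add (take M x) (fun i => y (M + i)) j
    rw [take_length] at this
    exact this.symm

lemma ag_take {A : Type*} (M : ℕ) (x z : ℕ → A) : Ag M (wordAppend (take M x) z) x := by
  intro i hi
  rw [wa_lt _ _ (by rwa [take_length])]; simp [take]

lemma ag_wa {A : Type*} (β : List A) (x y : ℕ → A) {m : ℕ} (h : m ≤ β.length) :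
    Ag m (wordAppend β x) (wordAppend β y) := by
  intro i hi
  rw [wa_lt _ _ (by omega), wa_lt _ _ (by omega)]

section Local

lemma strip {A : Type*} {β γ : List A} {c g : (ℕ → A) → (ℕ → A)}
    (h : ∀ x, wordAppend β (c x) = wordAppend γ (g x)) (hg : ∃ x y, g x 0 ≠ g y 0) :
    ∃ γ' : List A, ∀ x, c x = wordAppend γ' (g x) := by
  have hl : β.length ≤ γ.length := by
    by_contra hlt
    push Not at hlt
    obtain ⟨x, y, hxy⟩ := hg
    apply hxy
    have hx := congrFun (h x) (γ.length + 0)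
    have hy := congrFun (h y) (γ.length + 0)
    rw [wa_add, wa_lt _ _ (by omega)] at hx hy
    rw [← hx, ← hy]
  obtain ⟨x, -⟩ := hg
  obtain ⟨γ', rfl⟩ := wa_pre (h x) hl
  refine ⟨γ', fun x => ?_⟩
  have := h x
  rw [wa_append] at this
  exact wa_inj this

lemma local_unique {A : Type*} [TopologicalSpace A] {f : (ℕ → A) ≃ₜ (ℕ → A)} {α α' β β' : List A}
    {c g₁ g₂ : (ℕ → A) → (ℕ → A)}
    (h : ∀ x, f (wordAppend α x) = wordAppend β (c x))
    (h' : ∀ x, f (wordAppend α' x) = wordAppend β' (c x))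
    (h₁ : IsLocalAction f α g₁) (h₂ : IsLocalAction f α' g₂) : g₁ = g₂ := by
  obtain ⟨γ, hγ, hn⟩ := h₁
  obtain ⟨γ', hγ', hn'⟩ := h₂
  obtain ⟨δ, hδ⟩ := strip (fun x => (h x).symm.trans (hγ x)) hn
  obtain ⟨δ', hδ'⟩ := strip (fun x => (h' x).symm.trans (hγ' x)) hn'
  obtain ⟨ε, hε⟩ := strip (fun x => (hδ x).symm.trans (hδ' x)) hn'
  have : ε = [] := by
    rcases ε with _ | ⟨a, ε⟩
    · rfl
    · exfalso
      obtain ⟨x, y, hxy⟩ := hn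
      apply hxy
      rw [hε x, hε y, wa_lt _ _ (by simp), wa_lt _ _ (by simp)]
  subst this
  funext x
  rw [hε x, wa_nil]

end Local

lemma ag_open (M : ℕ) (x : ℕ → Bool) : {y : ℕ → Bool | Ag M y x} ∈ nhds x := by
  have : {y : ℕ → Bool | Ag M y x} = Set.pi (Set.Iio M) (fun i => {x i}) := by
    ext y; simp [Ag, Set.mem_pi]
  rw [this]
  exact set_pi_mem_nhds (Set.finite_Iio M) (fun i _ => (isOpen_discrete _).mem_nhds rfl)

lemma dense_of (E : Set (ℕ → Bool)) (h : ∀ x M, ∃ y ∈ E, Ag M y x) : Dense E := by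
  intro x
  rw [mem_closure_iff_nhds]
  intro U hU
  rw [nhds_pi, Filter.mem_pi] at hU
  obtain ⟨I, hI, t, ht, hsub⟩ := hU
  obtain ⟨M, hM⟩ := hI.bddAbove
  obtain ⟨y, hyE, hy⟩ := h x (M + 1)
  refine ⟨y, hsub ?_, hyE⟩
  intro i hi
  rw [hy i (Nat.lt_succ_of_le (hM hi))]
  exact mem_of_mem_nhds (ht i)

lemma extend {D : Type*} (ι : D → ℕ → Bool) (f : D → ℕ → Bool)
    (hd : ∀ x M, ∃ d, Ag M (ι d) x)
    (hc : ∀ x m, ∃ M, ∀ d d', Ag M (ι d) x → Ag M (ι d') x → Ag m (f d) (f d')) :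
    ∃ F : (ℕ → Bool) → (ℕ → Bool), Continuous F ∧ ∀ d, F (ι d) = f d := by
  choose dd hdd using hd
  choose M hM using hc
  let F : (ℕ → Bool) → (ℕ → Bool) := fun x m => f (dd x (M x (m + 1))) m
  have key : ∀ x m d, Ag (M x (m + 1)) (ι d) x → f d m = F x m := fun x m d hd =>
    hM x (m + 1) _ _ hd (hdd _ _) m (Nat.lt_succ_self m)
  refine ⟨F, ?_, ?_⟩
  · refine continuous_pi fun m => ?_
    rw [continuous_iff_continuousAt]
    intro x
    refine ContinuousAt.congr (f := fun _ => F x m) continuousAt_const ?_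
    filter_upwards [ag_open (M x (m + 1)) x] with x' hx'
    have h1 := hdd x' (max (M x (m + 1)) (M x' (m + 1)))
    rw [← key x m (dd x' (max (M x (m + 1)) (M x' (m + 1)))),
      ← key x' m (dd x' (max (M x (m + 1)) (M x' (m + 1))))]
    · exact fun i hi => h1 i (lt_of_lt_of_le hi (le_max_right _ _))
    · exact fun i hi => (h1 i (lt_of_lt_of_le hi (le_max_left _ _))).trans (hx' i hi)
  · intro d
    funext m
    exact (key _ m d (fun i _ => rfl)).symm

section Symb
variable {G : Type*} (r : G → ℕ → Bool)

/-- `t` is a branching time of `k`. -/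
def Br (k : G) (t : ℕ) : Prop := ∃ l, Ag t (r l) (r k) ∧ r l t ≠ r k t

open Classical in
/-- The compressed word of `k` up to time `t`. -/
noncomputable def w (k : G) : ℕ → List Bool
  | 0 => []
  | t + 1 => w k t ++ (if Br r k t then [r k t] else [])

variable {r}

lemma ag_symm {A : Type*} {t : ℕ} {x y : ℕ → A} (h : Ag t x y) : Ag t y x :=
  fun i hi => (h i hi).symm

lemma ag_trans {A : Type*} {t : ℕ} {x y z : ℕ → A} (h : Ag t x y) (h' : Ag t y z) : Ag t x z :=
  fun i hi => (h i hi).trans (h' i hi)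

lemma ag_mono {A : Type*} {s t : ℕ} {x y : ℕ → A} (h : Ag t x y) (hs : s ≤ t) : Ag s x y :=
  fun i hi => h i (by omega)

lemma w_succ_br {k : G} {t : ℕ} (h : Br r k t) : w r k (t + 1) = w r k t ++ [r k t] := by
  simp [w, h]

lemma w_succ_nbr {k : G} {t : ℕ} (h : ¬ Br r k t) : w r k (t + 1) = w r k t := by
  simp [w, h]

lemma br_congr {k l : G} {t : ℕ} (h : Ag (t + 1) (r l) (r k)) (hb : Br r k t) : Br r l t := by
  obtain ⟨m, hm, hne⟩ := hb
  refine ⟨m, ag_trans hm (ag_symm (ag_mono h (by omega))), ?_⟩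
  rw [h t (by omega)]; exact hne

lemma w_congr {k l : G} {t : ℕ} (h : Ag t (r l) (r k)) : w r l t = w r k t := by
  induction t with
  | zero => rfl
  | succ t ih =>
    have ih' := ih (ag_mono h (by omega))
    by_cases hb : Br r k t
    · rw [w_succ_br hb, w_succ_br (br_congr h hb), ih', h t (by omega)]
    · have hb' : ¬ Br r l t := fun h' => hb (br_congr (ag_symm h) h')
      rw [w_succ_nbr hb, w_succ_nbr hb', ih']

lemma br_congr' {k l : G} {t : ℕ} (h : Ag t (r l) (r k)) (hb : Br r k t) : Br r l t := by
  by_cases he : r l t = r k t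
  · refine br_congr (fun i hi => ?_) hb
    rcases Nat.lt_succ_iff_lt_or_eq.mp hi with h1 | rfl
    · exact h i h1
    · exact he
  · exact ⟨k, ag_symm h, fun h' => he h'.symm⟩

lemma w_pre (k : G) {s t : ℕ} (h : s ≤ t) : w r k s <+: w r k t := by
  induction t, h using Nat.le_induction with
  | base => exact List.prefix_rfl
  | succ t _ ih => exact ih.trans (by simp [w])

lemma w_length (k : G) (t : ℕ) : (w r k t).length ≤ t := by
  induction t with
  | zero => simp [w]
  | succ t ih => simp only [w, List.length_append]; split_ifs <;> simp <;> omega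

variable (hiso : ∀ k, ∃ T, ∀ l, Ag T (r l) (r k) → l = k)

include hiso in
lemma exists_code : ∃ code : G → List Bool, ∀ k, ∃ T, (∀ l, Ag T (r l) (r k) → l = k) ∧
    ∀ t, T ≤ t → w r k t = code k := by
  choose T hT using hiso
  refine ⟨fun k => w r k (T k), fun k => ⟨T k, hT k, fun t ht => ?_⟩⟩
  induction t, ht using Nat.le_induction with
  | base => rfl
  | succ t h ih =>
    rw [← ih]
    apply w_succ_nbr
    rintro ⟨l, hl, hne⟩
    exact hne (by rw [hT k l (ag_mono hl h)])

variable {code : G → List Bool} (hcode : ∀ k, ∃ T, (∀ l, Ag T (r l) (r k) → l = k) ∧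
    ∀ t, T ≤ t → w r k t = code k)

include hcode

lemma w_pre_code (k : G) (t : ℕ) : w r k t <+: code k := by
  obtain ⟨T, -, hT⟩ := hcode k
  rw [← hT (max t T) (le_max_right _ _)]
  exact w_pre k (le_max_left _ _)

lemma ag_of_pre {k l : G} {t : ℕ} {u y : ℕ → Bool}
    (h : wordAppend (code l) u = wordAppend (w r k t) y) : Ag t (r l) (r k) := by
  induction t generalizing y with
  | zero => intro i hi; omega
  | succ t ih =>
    obtain ⟨v, hv⟩ := w_pre (r := r) k (Nat.le_succ t)
    have ih' : Ag t (r l) (r k) := by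
      rw [Nat.succ_eq_add_one] at hv
      rw [← hv, wa_append] at h
      exact ih h
    have : r l t = r k t := by
      by_contra hne
      have hb : Br r k t := ⟨l, ih', hne⟩
      have hb' : Br r l t := br_congr' ih' hb
      obtain ⟨v, hv⟩ := w_pre_code hcode l (t + 1)
      rw [← hv, w_succ_br hb, w_succ_br hb', w_congr ih', wa_append, wa_append, wa_append] at h
      have := congrFun (wa_inj h) 0
      rw [wa_lt _ _ (by simp), wa_lt _ _ (by simp)] at this
      exact hne this
    intro i hi
    rcases Nat.lt_succ_iff_lt_or_eq.mp hi with h1 | rfl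
    · exact ih' i h1
    · exact this

lemma eq_of_pre {k l : G} {u y : ℕ → Bool}
    (h : wordAppend (code l) u = wordAppend (code k) y) : l = k ∧ u = y := by
  obtain ⟨T, hT1, hT⟩ := hcode k
  have h' := h
  rw [← hT T le_rfl] at h'
  have := hT1 l (ag_of_pre hcode h')
  subst this
  exact ⟨rfl, wa_inj h⟩

lemma next_br {k : G} {t : ℕ} (h : w r k t ≠ code k) :
    ∃ i, t ≤ i ∧ w r k i = w r k t ∧ Br r k i := by
  by_contra hcon
  push Not at hcon
  have : ∀ s, t ≤ s → w r k s = w r k t := by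
    intro s hs
    induction s, hs using Nat.le_induction with
    | base => rfl
    | succ s hs ih => rw [w_succ_nbr (hcon s hs ih), ih]
  obtain ⟨T, -, hT⟩ := hcode k
  apply h
  rw [← hT (max t T) (le_max_right _ _), this _ (le_max_left _ _)]

lemma kinds [Nonempty G] (α : List Bool) :
    (∃ k t, w r k t = α) ∨ (∃ k v, α = code k ++ v) := by
  induction α using List.reverseRecOn with
  | nil => exact Or.inl ⟨Classical.arbitrary G, 0, rfl⟩
  | append_singleton α b ih =>
    rcases ih with ⟨k, t, h⟩ | ⟨k, v, h⟩
    · by_cases hc : w r k t = code k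
      · exact Or.inr ⟨k, [b], by rw [← hc, h]⟩
      · obtain ⟨i, hi, hw, hb⟩ := next_br hcode hc
        left
        by_cases hbb : r k i = b
        · exact ⟨k, i + 1, by rw [w_succ_br hb, hw, h, hbb]⟩
        · obtain ⟨l, hl, hne⟩ := hb
          have hb' : Br r l i := ⟨k, ag_symm hl, fun h => hne h.symm⟩
          refine ⟨l, i + 1, ?_⟩
          rw [w_succ_br hb', w_congr hl, hw, h]
          congr 2
          revert hne hbb
          cases r l i <;> cases r k i <;> cases b <;> simp
    · exact Or.inr ⟨k, v ++ [b], by rw [h, List.append_assoc]⟩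

lemma dense_cone [Nonempty G] (α : List Bool) :
    ∃ k u y, wordAppend (code k) u = wordAppend α y := by
  rcases kinds hcode α with ⟨k, t, rfl⟩ | ⟨k, v, rfl⟩
  · obtain ⟨v, hv⟩ := w_pre_code hcode k t
    exact ⟨k, fun _ => false, wordAppend v (fun _ => false), by rw [← hv, wa_append]⟩
  · exact ⟨k, wordAppend v (fun _ => false), fun _ => false, by rw [wa_append]⟩

lemma long (m : ℕ) : ∃ T, ∀ k t, T ≤ t → m ≤ (w r k t).length ∨ w r k t = code k := by
  have : ∀ β : List Bool, ∃ T, ∀ k t, T ≤ t → w r k t = β → w r k t = code k := by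
    intro β
    by_cases h : ∃ t k, w r k t = β ∧ Br r k t
    · obtain ⟨t0, k0, h0, hb0⟩ := h
      refine ⟨t0 + 1, fun k t ht hw => ?_⟩
      exfalso
      obtain ⟨v, hv⟩ := w_pre_code hcode k t
      have hag : Ag t0 (r k) (r k0) := by
        apply ag_of_pre hcode (u := fun _ => false) (y := wordAppend v (fun _ => false))
        rw [← hv, wa_append, hw, h0]
      have hb := br_congr' hag hb0
      have := (w_pre (r := r) k ht).length_le
      rw [w_succ_br hb, w_congr hag, h0, hw] at this
      simp at this
    · refine ⟨0, fun k t _ hw => ?_⟩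
      by_contra hne
      obtain ⟨i, -, hi, hb⟩ := next_br hcode hne
      exact h ⟨i, k, hi.trans hw, hb⟩
  choose T hT using this
  obtain ⟨B, hB⟩ := ((List.finite_length_lt Bool m).image T).bddAbove
  refine ⟨B, fun k t ht => ?_⟩
  by_cases hm : m ≤ (w r k t).length
  · exact Or.inl hm
  · right
    refine hT (w r k t) k t (le_trans ?_ ht) rfl
    exact hB ⟨_, by simpa using hm, rfl⟩

end Symb

section Symb2
universe u
variable {G : Type u} [Group G] (r : G → ℕ → Bool)

/-- The element `h` carries one subtree of itineraries to another one. -/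
def Sim (h : G) (t : ℕ) (k : G) (t' : ℕ) (k' : G) : Prop :=
  ∀ l, Ag t (r l) (r k) → Ag t' (r (h * l)) (r k') ∧ ∀ m, r (h * l) (t' + m) = r l (t + m)

variable {r}

lemma sim_br {h : G} {t t' : ℕ} {k k' : G} (hs : Sim r h t k t' k') {l : G}
    (hl : Ag t (r l) (r k)) {m : ℕ} (hb : Br r l (t + m)) : Br r (h * l) (t' + m) := by
  obtain ⟨l₂, h₂, hne⟩ := hb
  have hl₂ : Ag t (r l₂) (r k) := ag_trans (ag_mono h₂ (by omega)) hl
  obtain ⟨a, b⟩ := hs l hl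
  obtain ⟨a₂, b₂⟩ := hs l₂ hl₂
  refine ⟨h * l₂, fun i hi => ?_, by rw [b, b₂]; exact hne⟩
  by_cases hi' : i < t'
  · exact (a₂ i hi').trans (a i hi').symm
  · obtain ⟨j, rfl⟩ := Nat.exists_eq_add_of_le (not_lt.mp hi')
    rw [b, b₂]
    exact h₂ _ (by omega)

lemma sim_code {code : G → List Bool} (hcode : ∀ k, ∃ T, (∀ l, Ag T (r l) (r k) → l = k) ∧
    ∀ t, T ≤ t → w r k t = code k)
    {h : G} {t t' : ℕ} {k k' : G} (hs : Sim r h t k t' k') (hs' : Sim r h⁻¹ t' k' t k) {l : G}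
    (hl : Ag t (r l) (r k)) :
    ∃ v, code l = w r k t ++ v ∧ code (h * l) = w r k' t' ++ v := by
  have hbr : ∀ m, Br r l (t + m) ↔ Br r (h * l) (t' + m) := by
    intro m
    refine ⟨sim_br hs hl, fun hb => ?_⟩
    have := sim_br hs' (hs l hl).1 hb
    rwa [inv_mul_cancel_left] at this
  have main : ∀ m, ∃ v, w r l (t + m) = w r k t ++ v ∧ w r (h * l) (t' + m) = w r k' t' ++ v := by
    intro m
    induction m with
    | zero => exact ⟨[], by simp [w_congr hl], by simp [w_congr (hs l hl).1]⟩
    | succ m ih =>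
      obtain ⟨v, h1, h2⟩ := ih
      by_cases hb : Br r l (t + m)
      · refine ⟨v ++ [r l (t + m)], ?_, ?_⟩
        · rw [← add_assoc, w_succ_br hb, h1, List.append_assoc]
        · rw [← add_assoc, w_succ_br ((hbr m).1 hb), h2, (hs l hl).2, List.append_assoc]
      · refine ⟨v, ?_, ?_⟩
        · rw [← add_assoc, w_succ_nbr hb, h1]
        · rw [← add_assoc, w_succ_nbr (fun h' => hb ((hbr m).2 h')), h2]
  obtain ⟨T, -, hT⟩ := hcode l
  obtain ⟨T', -, hT'⟩ := hcode (h * l)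
  obtain ⟨v, h1, h2⟩ := main (T + T')
  rw [hT _ (by omega)] at h1
  rw [hT' _ (by omega)] at h2
  exact ⟨v, h1, h2⟩

lemma cont_cond {code : G → List Bool} (hcode : ∀ k, ∃ T, (∀ l, Ag T (r l) (r k) → l = k) ∧
    ∀ t, T ≤ t → w r k t = code k) (g : G) (τ : ℕ → ℕ)
    (hτ : ∀ t k l, Ag t (r l) (r k) → Ag (τ t) (r (g * l)) (r (g * k)))
    (hτ' : ∀ T, ∃ t₀, ∀ t, t₀ ≤ t → T ≤ τ t) (x : ℕ → Bool) (m : ℕ) :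
    ∃ M, ∀ d d' : G × (ℕ → Bool), Ag M (wordAppend (code d.1) d.2) x →
      Ag M (wordAppend (code d'.1) d'.2) x →
      Ag m (wordAppend (code (g * d.1)) d.2) (wordAppend (code (g * d'.1)) d'.2) := by
  by_cases hx : ∃ k y, x = wordAppend (code k) y
  · obtain ⟨k, y, rfl⟩ := hx
    have key : ∀ d : G × (ℕ → Bool),
        Ag ((code k).length + m) (wordAppend (code d.1) d.2) (wordAppend (code k) y) →
        d.1 = k ∧ Ag m d.2 y := by
      rintro ⟨l, u⟩ hd
      have hp : take ((code k).length + m) (wordAppend (code k) y) = code k ++ take m y := by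
        apply List.ext_getElem
        · simp [take_length]
        · intro i h1 h2
          simp only [take, List.getElem_ofFn]
          by_cases hi : i < (code k).length
          · rw [wa_lt _ _ hi, List.getElem_append_left hi]
          · obtain ⟨j, rfl⟩ := Nat.exists_eq_add_of_le (not_lt.mp hi)
            rw [wa_add, List.getElem_append_right (by omega)]
            simp
      obtain ⟨z, hz⟩ := take_ag hd
      rw [hp, wa_append] at hz
      obtain ⟨rfl, h2⟩ := eq_of_pre hcode hz
      exact ⟨rfl, h2 ▸ ag_take m y z⟩
    refine ⟨(code k).length + m, fun d d' hd hd' => ?_⟩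
    obtain ⟨h1, h2⟩ := key d hd
    obtain ⟨h1', h2'⟩ := key d' hd'
    rw [h1, h1']
    intro i hi
    by_cases hi' : i < (code (g * k)).length
    · rw [wa_lt _ _ hi', wa_lt _ _ hi']
    · obtain ⟨j, rfl⟩ := Nat.exists_eq_add_of_le (not_lt.mp hi')
      rw [wa_add, wa_add]
      exact (h2 j (by omega)).trans (h2' j (by omega)).symm
  · obtain ⟨T, hT⟩ := long hcode m
    obtain ⟨M, hM⟩ := hτ' T
    refine ⟨M, fun d d' hd hd' => ?_⟩
    have hxM : x = wordAppend (take M x) (fun i => x (M + i)) := by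
      obtain ⟨z, hz⟩ := take_ag (M := M) (x := x) (y := x) (fun i _ => rfl)
      rw [hz]
      congr 1
      · rw [← hz]
      · funext i
        have := wa_add (take M x) z i
        rw [take_length] at this
        exact this.symm
    rcases kinds hcode (take M x) with ⟨k, t, hk⟩ | ⟨k, v, hv⟩
    · have htM : M ≤ t := by
        have := w_length (r := r) k t
        rwa [hk, take_length] at this
      obtain ⟨z, hz⟩ := take_ag hd
      obtain ⟨z', hz'⟩ := take_ag hd'
      rw [← hk] at hz hz'
      have a := ag_of_pre hcode hz
      have a' := ag_of_pre hcode hz'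
      have b := hτ t k d.1 a
      have b' := hτ t k d'.1 a'
      have pre : ∀ (l : G) (u : ℕ → Bool), Ag (τ t) (r l) (r (g * k)) →
          ∃ y, wordAppend (code l) u = wordAppend (w r (g * k) (τ t)) y := by
        intro l u hl
        obtain ⟨v, hv⟩ := w_pre_code hcode l (τ t)
        exact ⟨wordAppend v u, by rw [← hv, wa_append, w_congr hl]⟩
      obtain ⟨y, hy⟩ := pre (g * d.1) d.2 b
      obtain ⟨y', hy'⟩ := pre (g * d'.1) d'.2 b'
      rcases hT (g * k) (τ t) (hM t htM) with hlen | hc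
      · rw [hy, hy']
        exact ag_wa _ _ _ hlen
      · exfalso
        have single : ∀ l, Ag t (r l) (r k) → l = k := by
          intro l hl
          obtain ⟨y, hy⟩ := pre (g * l) (fun _ => false) (hτ t k l hl)
          rw [hc] at hy
          exact mul_left_cancel (eq_of_pre hcode hy).1
        have : w r k t = code k := by
          by_contra hne
          obtain ⟨i, hi, -, l, hl, hne'⟩ := next_br hcode hne
          exact hne' (by rw [single l (ag_mono hl hi)])
        exact hx ⟨k, _, by rw [← this, hk]; exact hxM⟩
    · exfalso
      exact hx ⟨k, _, by rw [hv, wa_append] at hxM; exact hxM⟩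

theorem symb (hiso : ∀ k, ∃ T, ∀ l, Ag T (r l) (r k) → l = k)
    (H : ∀ g : G, ∃ τ : ℕ → ℕ,
      (∀ t k l, Ag t (r l) (r k) → Ag (τ t) (r (g * l)) (r (g * k))) ∧
      (∀ T, ∃ t₀, ∀ t, t₀ ≤ t → T ≤ τ t) ∧
      ∃ (Q : Type u) (Θ : ℕ → G → Q), (Set.range (fun x : ℕ × G => Θ x.1 x.2)).Finite ∧
        ∀ t k t' k', Θ t k = Θ t' k' → ∃ h,
          Sim r h t k t' k' ∧ Sim r h⁻¹ t' k' t k ∧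
          Sim r (g * h * g⁻¹) (τ t) (g * k) (τ t') (g * k') ∧
          Sim r (g * h * g⁻¹)⁻¹ (τ t') (g * k') (τ t) (g * k))
    (R : Subgroup ((ℕ → Bool) ≃ₜ (ℕ → Bool)))
    (hR : ∀ f, f ∈ R ↔ IsRational f) :
    ∃ φ : G →* ↥R, Function.Injective φ := by
  obtain ⟨code, hcode⟩ := exists_code hiso
  have hdense : ∀ x M, ∃ d : G × (ℕ → Bool), Ag M (wordAppend (code d.1) d.2) x := by
    intro x M
    obtain ⟨k, u, y, h⟩ := dense_cone hcode (take M x)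
    exact ⟨(k, u), by simp only [h]; exact ag_take M x y⟩
  have hF : ∀ g : G, ∃ F : (ℕ → Bool) → (ℕ → Bool), Continuous F ∧
      ∀ d : G × (ℕ → Bool), F (wordAppend (code d.1) d.2) = wordAppend (code (g * d.1)) d.2 := by
    intro g
    obtain ⟨τ, h1, h2, -⟩ := H g
    exact extend (fun d : G × (ℕ → Bool) => wordAppend (code d.1) d.2) _ hdense
      (cont_cond hcode g τ h1 h2)
  choose F hFc hF using hF
  have hD : Dense (Set.range fun d : G × (ℕ → Bool) => wordAppend (code d.1) d.2) := by
    apply dense_of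
    intro x M
    obtain ⟨d, hd⟩ := hdense x M
    exact ⟨_, ⟨d, rfl⟩, hd⟩
  have hmul : ∀ g h x, F (g * h) x = F g (F h x) := by
    intro g h
    have := Continuous.ext_on hD (hFc (g * h)) ((hFc g).comp (hFc h)) (by
      rintro _ ⟨d, rfl⟩
      simp only [Function.comp]
      rw [hF, hF h d, hF g (h * d.1, d.2), mul_assoc])
    exact fun x => congrFun this x
  have hone : ∀ x, F 1 x = x := by
    have := Continuous.ext_on hD (hFc 1) continuous_id (by
      rintro _ ⟨d, rfl⟩
      simp only [id]
      rw [hF, one_mul])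
    exact fun x => congrFun this x
  let Φ : G → ((ℕ → Bool) ≃ₜ (ℕ → Bool)) := fun g =>
    { toFun := F g
      invFun := F g⁻¹
      left_inv := fun x => by rw [← hmul, inv_mul_cancel, hone]
      right_inv := fun x => by rw [← hmul, mul_inv_cancel, hone]
      continuous_toFun := hFc g
      continuous_invFun := hFc g⁻¹ }
  have hΦ : ∀ g x, Φ g x = F g x := fun _ _ => rfl
  have hrat : ∀ g, IsRational (Φ g) := by
    intro g
    obtain ⟨τ, hτ, -, Q, Θ, hfin, hΘ⟩ := H g
    have hsub : {g₁ | ∃ α, IsLocalAction (Φ g) α g₁} ⊆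
        (⋃ θ ∈ Set.range (fun x : ℕ × G => Θ x.1 x.2),
          {g₁ | ∃ t k, Θ t k = θ ∧ IsLocalAction (Φ g) (w r k t) g₁}) ∪
        {g₁ | ∃ k v, IsLocalAction (Φ g) (code k ++ v) g₁} := by
      rintro g₁ ⟨α, hα⟩
      rcases kinds hcode α with ⟨k, t, rfl⟩ | ⟨k, v, rfl⟩
      · left
        rw [Set.mem_iUnion₂]
        exact ⟨Θ t k, ⟨(t, k), rfl⟩, t, k, rfl, hα⟩
      · exact Or.inr ⟨k, v, hα⟩
    refine Set.Finite.subset (Set.Finite.union (hfin.biUnion fun θ _ => ?_) ?_) hsub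
    · apply Set.Subsingleton.finite
      rintro g₁ ⟨t, k, hθ, h₁⟩ g₂ ⟨t', k', hθ', h₂⟩
      obtain ⟨h, s1, s2, s3, s4⟩ := hΘ t k t' k' (hθ.trans hθ'.symm)
      let β := w r (g * k) (τ t)
      let β' := w r (g * k') (τ t')
      let c : (ℕ → Bool) → (ℕ → Bool) := fun x i => F g (wordAppend (w r k t) x) (β.length + i)
      have hcc : Continuous c := continuous_pi fun i =>
        (continuous_apply (β.length + i)).comp ((hFc g).comp (wa_cont _))
      let E : Set (ℕ → Bool) := {x | ∃ l u, wordAppend (code l) u = wordAppend (w r k t) x}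
      have hE : Dense E := by
        apply dense_of
        intro x M
        obtain ⟨l, u, y, hy⟩ := dense_cone hcode (w r k t ++ take M x)
        rw [wa_append] at hy
        exact ⟨_, ⟨l, u, hy⟩, ag_take M x y⟩
      have key : ∀ x ∈ E, F g (wordAppend (w r k t) x) = wordAppend β (c x) ∧
          F g (wordAppend (w r k' t') x) = wordAppend β' (c x) := by
        rintro x ⟨l, u, hlu⟩
        have hl := ag_of_pre hcode hlu
        obtain ⟨v, hv, hv'⟩ := sim_code hcode s1 s2 hl
        obtain ⟨v₂, hv₂, hv₂'⟩ := sim_code hcode s3 s4 (hτ t k l hl)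
        have hx : x = wordAppend v u := by
          rw [hv, wa_append] at hlu
          exact (wa_inj hlu).symm
        have e1 : F g (wordAppend (w r k t) x) = wordAppend β (wordAppend v₂ u) := by
          rw [← hlu, hF g (l, u), hv₂, wa_append]
        have e2 : c x = wordAppend v₂ u := by
          funext i
          simp only [c]
          rw [e1, wa_add]
        have e3 : g * h * g⁻¹ * (g * l) = g * (h * l) := by group
        rw [e3] at hv₂'
        refine ⟨by rw [e1, e2], ?_⟩
        rw [e2, hx, ← wa_append, ← hv', hF g (h * l, u), hv₂', wa_append]
      have k1 := Continuous.ext_on hE ((hFc g).comp (wa_cont (w r k t)))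
        ((wa_cont β).comp hcc) (fun x hx => (key x hx).1)
      have k2 := Continuous.ext_on hE ((hFc g).comp (wa_cont (w r k' t')))
        ((wa_cont β').comp hcc) (fun x hx => (key x hx).2)
      exact local_unique (fun x => congrFun k1 x) (fun x => congrFun k2 x) h₁ h₂
    · apply Set.Subsingleton.finite
      rintro g₁ ⟨k, v, h₁⟩ g₂ ⟨k', v', h₂⟩
      have : ∀ k v x, Φ g (wordAppend (code k ++ v) x) = wordAppend (code (g * k) ++ v) x := by
        intro k v x
        rw [hΦ, wa_append, wa_append, hF g (k, _)]
      exact local_unique (c := id) (this k v) (this k' v') h₁ h₂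
  let ψ : G →* ((ℕ → Bool) ≃ₜ (ℕ → Bool)) :=
    { toFun := Φ
      map_one' := Homeomorph.ext fun x => hone x
      map_mul' := fun g h => Homeomorph.ext fun x => hmul g h x }
  refine ⟨ψ.codRestrict R (fun g => (hR _).2 (hrat g)), ?_⟩
  intro g h hgh
  have h1 : Φ g = Φ h := congrArg Subtype.val hgh
  have h2 : F g (wordAppend (code 1) fun _ => false) = F h (wordAppend (code 1) fun _ => false) := by
    rw [← hΦ, ← hΦ, h1]
  rw [hF g (1, _), hF h (1, _)] at h2
  simpa using (eq_of_pre hcode h2).1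

end Symb2

section Geo
universe u
variable {G : Type u} [Group G]

/-- A hyperbolic geodesic norm on a group. -/
structure HN (N : G → ℕ) (D : ℕ) : Prop where
  one : N 1 = 0
  eq_one : ∀ g, N g = 0 → g = 1
  inv : ∀ g, N g⁻¹ = N g
  mul : ∀ g h, N (g * h) ≤ N g + N h
  step : ∀ g, N g ≠ 0 → ∃ y, N y = 1 ∧ N (y⁻¹ * g) + 1 = N g
  fin : ∀ n, {g | N g ≤ n}.Finite
  hyp : ∀ x y z w : G, N (x⁻¹ * y) + N (z⁻¹ * w) ≤
    max (N (x⁻¹ * z) + N (y⁻¹ * w)) (N (x⁻¹ * w) + N (y⁻¹ * z)) + D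

/-- distance -/
def dd (N : G → ℕ) (x y : G) : ℕ := N (x⁻¹ * y)

open Classical in
/-- local view -/
noncomputable def V (N : G → ℕ) (C : ℕ) (q : G) : G → ℤ :=
  fun x => if N x ≤ C then (N (x⁻¹ * q) : ℤ) - N q else 0

open Classical in
/-- the canonical descending generator read from a view -/
noncomputable def stepV (N : G → ℕ) (v : G → ℤ) : G :=
  if h : ∃ y, N y = 1 ∧ v y < 0 then h.choose else 1

/-- one step of the canonical geodesic -/
noncomputable def T (N : G → ℕ) (C : ℕ) (q : G) : G := (stepV N (V N C q))⁻¹ * q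

/-- the `n`-th point of the canonical geodesic to `k` -/
noncomputable def pp (N : G → ℕ) (C : ℕ) (n : ℕ) (k : G) : G := k * ((T N C)^[n] k)⁻¹

variable {N : G → ℕ} {D C : ℕ} (hN : HN N D)

section
include hN

lemma dd_symm (x y : G) : dd N x y = dd N y x := by
  unfold dd; rw [← hN.inv]; congr 1; group

lemma dd_tri (x y z : G) : dd N x z ≤ dd N x y + dd N y z := by
  unfold dd
  have := hN.mul (x⁻¹ * y) (y⁻¹ * z)
  rwa [show x⁻¹ * y * (y⁻¹ * z) = x⁻¹ * z by group] at this

omit hN in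
lemma dd_left (g x y : G) : dd N (g * x) (g * y) = dd N x y := by
  unfold dd; congr 1; group

omit hN in
lemma dd_one (x : G) : dd N 1 x = N x := by simp [dd]

lemma dd_hyp (x y z w : G) : dd N x y + dd N z w ≤
    max (dd N x z + dd N y w) (dd N x w + dd N y z) + D := hN.hyp x y z w

lemma geo (a e : G) (m : ℕ) (hm : m ≤ dd N a e) :
    ∃ y, dd N a y = m ∧ dd N y e + m = dd N a e := by
  induction m with
  | zero => exact ⟨a, by simp [dd, hN.one], by simp⟩
  | succ m ih =>
    obtain ⟨y, h1, h2⟩ := ih (by omega)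
    obtain ⟨s, hs, hs'⟩ := hN.step (y⁻¹ * e) (by unfold dd at *; omega)
    have e1 : dd N (y * s) e + 1 = dd N y e := by
      unfold dd
      rw [← hs']; congr 2; group
    have e2 : dd N y (y * s) = 1 := by unfold dd; rw [← hs]; congr 1; group
    refine ⟨y * s, ?_, by omega⟩
    have t1 := dd_tri hN a y (y * s)
    have t2 := dd_tri hN a (y * s) e
    omega

lemma localL {p k l z : G} (hC : 3 * D ≤ C)
    (hv : ∀ y, dd N p y ≤ C → (dd N y k : ℤ) - dd N p k = dd N y l - dd N p l)
    (hk : dd N z p + dd N p k ≤ dd N z k + 2 * D)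
    (hl : dd N z p + dd N p l ≤ dd N z l + 2 * D) :
    (dd N z k : ℤ) - dd N p k = dd N z l - dd N p l := by
  have key : ∀ e, dd N z p + dd N p e ≤ dd N z e + 2 * D →
      ∃ y, dd N p y ≤ C ∧ dd N z y + dd N y e = dd N z e := by
    intro e he
    by_cases hle : dd N z p ≤ dd N z e
    · obtain ⟨y, h1, h2⟩ := geo hN z e _ hle
      refine ⟨y, ?_, by omega⟩
      have := dd_hyp hN p y z e
      rw [dd_symm hN p z, dd_symm hN y z] at this
      omega
    · refine ⟨e, by omega, by simp [dd, hN.one]⟩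
  obtain ⟨y, h1, h2⟩ := key k hk
  obtain ⟨y', h1', h2'⟩ := key l hl
  have a := hv y h1
  have a' := hv y' h1'
  have b := dd_tri hN z y l
  have b' := dd_tri hN z y' k
  omega

lemma step_spec (hC : 1 ≤ C) {q : G} (hq : N q ≠ 0) :
    N (stepV N (V N C q)) = 1 ∧ N (T N C q) + 1 = N q := by
  have h : ∃ y, N y = 1 ∧ V N C q y < 0 := by
    obtain ⟨y, h1, h2⟩ := hN.step q hq
    refine ⟨y, h1, ?_⟩
    rw [V, if_pos (by omega)]; omega
  have hs : stepV N (V N C q) = h.choose := by rw [stepV, dif_pos h]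
  obtain ⟨h1, h2⟩ := h.choose_spec
  rw [← hs] at h1 h2
  refine ⟨h1, ?_⟩
  rw [V, if_pos (by omega)] at h2
  have := hN.mul (stepV N (V N C q)) (T N C q)
  rw [T, mul_inv_cancel_left] at this
  rw [T]
  omega

lemma step_one (hC : 1 ≤ C) : stepV N (V N C 1) = 1 := by
  rw [stepV, dif_neg]
  rintro ⟨y, h1, h2⟩
  rw [V, if_pos (by omega), mul_one, hN.inv, hN.one] at h2
  omega

lemma T_one (hC : 1 ≤ C) : T N C 1 = 1 := by
  rw [T, step_one hN hC]; simp

lemma step_le (hC : 1 ≤ C) (q : G) : N (stepV N (V N C q)) ≤ 1 := by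
  by_cases h : N q = 0
  · rw [hN.eq_one q h, step_one hN hC, hN.one]; omega
  · exact (step_spec hN hC h).1.le

lemma T_norm (hC : 1 ≤ C) (q : G) : N (T N C q) = N q - 1 := by
  by_cases h : N q = 0
  · rw [hN.eq_one q h, T_one hN hC, hN.one]
  · have := (step_spec hN hC h).2; omega

lemma T_iter (hC : 1 ≤ C) (n : ℕ) (q : G) : N ((T N C)^[n] q) = N q - n := by
  induction n with
  | zero => simp
  | succ n ih => rw [Function.iterate_succ_apply', T_norm hN hC, ih]; omega

lemma V_one (hC : 1 ≤ C) {q : G} (h : V N C q = V N C 1) : q = 1 := by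
  by_contra hq
  obtain ⟨y, h1, h2⟩ := hN.step q (fun h' => hq (hN.eq_one q h'))
  have := congrFun h y
  rw [V, if_pos (by omega), V, if_pos (by omega), mul_one, hN.inv, hN.one] at this
  omega

end

lemma pp_zero (k : G) : pp N C 0 k = 1 := by simp [pp]

lemma pp_mul (n : ℕ) (k : G) : pp N C n k * (T N C)^[n] k = k := by simp [pp]

lemma pp_inv_mul (n : ℕ) (k : G) : (pp N C n k)⁻¹ * k = (T N C)^[n] k := by simp [pp]

lemma pp_succ (n : ℕ) (k : G) :
    pp N C (n + 1) k = pp N C n k * stepV N (V N C ((T N C)^[n] k)) := by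
  rw [pp, pp, Function.iterate_succ_apply', T]; group

lemma pp_add (i j : ℕ) (k : G) :
    pp N C (i + j) k = pp N C i k * pp N C j ((T N C)^[i] k) := by
  rw [pp, pp, pp, ← Function.iterate_add_apply, add_comm j i]; group

lemma pp_congr {n : ℕ} {k l : G} (h : ∀ i < n, V N C ((T N C)^[i] l) = V N C ((T N C)^[i] k)) :
    pp N C n l = pp N C n k := by
  induction n with
  | zero => rw [pp_zero, pp_zero]
  | succ n ih => rw [pp_succ, pp_succ, ih (fun i hi => h i (by omega)), h n (by omega)]

lemma track {n : ℕ} {k l : G} (h : ∀ i < n, V N C ((pp N C i k)⁻¹ * l) = V N C ((T N C)^[i] k)) :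
    ∀ i ≤ n, (T N C)^[i] l = (pp N C i k)⁻¹ * l := by
  intro i hi
  induction i with
  | zero => simp [pp_zero]
  | succ i ih =>
    rw [Function.iterate_succ_apply', ih (by omega), T, h i (by omega), pp_succ]; group

lemma view_iff {a b k l : G} : V N C (a⁻¹ * k) = V N C (b⁻¹ * l) ↔
    ∀ x, N x ≤ C → (dd N (a * x) k : ℤ) - dd N a k = dd N (b * x) l - dd N b l := by
  have e : ∀ a x k : G, x⁻¹ * (a⁻¹ * k) = (a * x)⁻¹ * k := fun a x k => by group
  constructor
  · intro h x hx
    have := congrFun h x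
    rw [V, if_pos hx, V, if_pos hx, e, e] at this
    exact this
  · intro h
    funext x
    by_cases hx : N x ≤ C
    · have := h x hx
      rw [V, if_pos hx, V, if_pos hx, e, e]
      exact this
    · rw [V, if_neg hx, V, if_neg hx]

lemma view_ball {p k l : G} (h : V N C (p⁻¹ * l) = V N C (p⁻¹ * k)) :
    ∀ y, dd N p y ≤ C → (dd N y k : ℤ) - dd N p k = dd N y l - dd N p l := by
  intro y hy
  have := view_iff.1 h (p⁻¹ * y) hy
  rw [mul_inv_cancel_left] at this
  exact this.symm

section
include hN

lemma pp_norm (hC : 1 ≤ C) (n : ℕ) (k : G) : N (pp N C n k) ≤ n := by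
  induction n with
  | zero => rw [pp_zero, hN.one]
  | succ n ih =>
    rw [pp_succ]
    have := hN.mul (pp N C n k) (stepV N (V N C ((T N C)^[n] k)))
    have := step_le hN hC ((T N C)^[n] k)
    omega

lemma pp_dd_end (hC : 1 ≤ C) (n : ℕ) (k : G) : dd N (pp N C n k) k = N k - n := by
  rw [dd, pp_inv_mul, T_iter hN hC]

lemma pp_dd (hC : 1 ≤ C) {i j : ℕ} (hij : i ≤ j) (k : G) :
    dd N (pp N C i k) (pp N C j k) ≤ j - i := by
  obtain ⟨m, rfl⟩ := Nat.exists_eq_add_of_le hij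
  rw [dd, pp_add, inv_mul_cancel_left]
  have := pp_norm hN hC m ((T N C)^[i] k)
  omega

lemma geoL (hC : C = 3 * D + 1) {k l : G} {n : ℕ} (hn : 2 * D + 1 ≤ n)
    (h : ∀ j, n ≤ j + (2 * D + 1) → j < n → V N C ((pp N C j k)⁻¹ * l) = V N C ((T N C)^[j] k)) :
    ∀ i < n, V N C ((pp N C i k)⁻¹ * l) = V N C ((T N C)^[i] k) := by
  have hC1 : 1 ≤ C := by omega
  intro i hi
  by_cases hi2 : n ≤ i + (2 * D + 1)
  · exact h i hi2 hi
  have hb := h (n - 1) (by omega) (by omega)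
  by_cases hk : N k ≤ n - 1
  · have h1 : (T N C)^[n - 1] k = 1 := hN.eq_one _ (by rw [T_iter hN hC1]; omega)
    have h2 : pp N C (n - 1) k = k := by rw [pp, h1]; simp
    rw [h1, h2] at hb
    have := V_one hN hC1 hb
    have hlk : l = k := (inv_mul_eq_one.1 this).symm
    rw [hlk, pp_inv_mul]
  · set b := n - 1 with hbdef
    set p := pp N C b k with hp
    set a := pp N C (b - (2 * D + 1)) k with ha
    have hb' : V N C (p⁻¹ * l) = V N C (p⁻¹ * k) := by rw [hb, pp_inv_mul]
    have hball := view_ball hb'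
    have hap : dd N a p ≤ 2 * D + 1 := by
      have h1 : dd N a p ≤ b - (b - (2 * D + 1)) :=
        pp_dd hN hC1 (show b - (2 * D + 1) ≤ b by omega) k
      omega
    have hak : dd N a k = N k - (b - (2 * D + 1)) := pp_dd_end hN hC1 _ k
    have hpk : dd N p k = N k - b := pp_dd_end hN hC1 _ k
    have hap' : dd N a p = 2 * D + 1 := by
      have := dd_tri hN a p k
      omega
    have hak' : dd N a k = dd N p k + (2 * D + 1) := by omega
    have hal : dd N a l = dd N p l + (2 * D + 1) := by
      have := hball a (by rw [dd_symm hN]; omega)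
      omega
    set ai := pp N C i k with hai
    have haia : dd N ai a ≤ b - (2 * D + 1) - i := pp_dd hN hC1 (by omega) k
    have haip : dd N ai p = b - i := by
      have h1 : dd N ai p ≤ b - i := pp_dd hN hC1 (show i ≤ b by omega) k
      have h2 := dd_tri hN ai p k
      have h3 : dd N ai k = N k - i := pp_dd_end hN hC1 _ k
      omega
    have key : ∀ x, N x ≤ C → (dd N (ai * x) k : ℤ) - dd N p k = dd N (ai * x) l - dd N p l := by
      intro x hx
      by_cases hz : dd N p (ai * x) ≤ C
      · exact hball _ hz
      have hzz : dd N (ai * x) ai ≤ C := by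
        rw [dd_symm hN, dd, inv_mul_cancel_left]; exact hx
      have main : ∀ e, dd N a e = dd N p e + (2 * D + 1) →
          dd N (ai * x) p + dd N p e ≤ dd N (ai * x) e + 2 * D := by
        intro e he
        have q1 := dd_hyp hN ai p a e
        rw [dd_symm hN p a] at q1
        have q2 := dd_hyp hN (ai * x) p ai e
        rw [dd_symm hN p ai] at q2
        rw [dd_symm hN] at hz
        omega
      exact localL hN (by omega) hball (main k hak') (main l hal)
    have fin : V N C (ai⁻¹ * l) = V N C (ai⁻¹ * k) := view_iff.2 (fun x hx => by
      have k1 := key x hx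
      have k2 := key 1 (by rw [hN.one]; omega)
      rw [mul_one] at k2
      omega)
    rw [fin]
    exact congrArg _ (pp_inv_mul i k)

omit hN in
lemma views_to {n : ℕ} {k l : G}
    (h : ∀ i < n, V N C ((T N C)^[i] l) = V N C ((T N C)^[i] k)) :
    ∀ i ≤ n, pp N C i l = pp N C i k :=
  fun i hi => pp_congr fun j hj => h j (by omega)

lemma act (hC : C = 3 * D + 1) (g : G) : ∃ K M : ℕ, ∀ n k,
    (∀ l, (∀ i < n, V N C ((T N C)^[i] l) = V N C ((T N C)^[i] k)) →
      ∀ i < n - K, V N C ((T N C)^[i] (g * l)) = V N C ((T N C)^[i] (g * k))) ∧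
    dd N (pp N C (n - K) (g * k)) (g * pp N C n k) ≤ M := by
  have hC1 : 1 ≤ C := by omega
  have hgk : ∀ k, dd N 1 (g * k) ≤ N g + N k := fun k => by rw [dd_one]; exact hN.mul _ _
  have hgk' : ∀ k, dd N g (g * k) = N k := fun k => by rw [dd, inv_mul_cancel_left]
  refine ⟨N g + C + D + 1, N g + (N g + C + D + 1) + D, fun n k => ?_⟩
  set K := N g + C + D + 1 with hK
  have tri1 := dd_tri hN g 1 (g * k)
  rw [dd_symm hN g 1, dd_one, hgk' k, dd_one] at tri1
  constructor
  · intro l hl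
    by_cases hn : n ≤ K
    · intro i hi; omega
    have hpl := views_to hl (n - 1) (by omega)
    have hb := hl (n - 1) (by omega)
    set b := n - 1 with hbdef
    by_cases hk : N k ≤ b
    · have h1 : (T N C)^[b] k = 1 := hN.eq_one _ (by rw [T_iter hN hC1]; omega)
      rw [h1] at hb
      have h2 := V_one hN hC1 hb
      have : l = k := by
        rw [← pp_mul (N := N) (C := C) b l, ← pp_mul (N := N) (C := C) b k, hpl, h1, h2]
      intro i _
      rw [this]
    have hlb : b ≤ N l := by
      by_contra hlt
      have h1 : (T N C)^[b] l = 1 := hN.eq_one _ (by rw [T_iter hN hC1]; omega)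
      rw [h1] at hb
      have h2 := V_one hN hC1 hb.symm
      have := T_iter hN hC1 b k
      rw [h2, hN.one] at this
      omega
    set p := pp N C b k with hp
    have hdk : dd N (g * p) (g * k) = N k - b := by
      rw [dd_left]; exact pp_dd_end hN hC1 b k
    have hdl : dd N (g * p) (g * l) = N l - b := by
      rw [dd_left, ← hpl]; exact pp_dd_end hN hC1 b l
    have hgp : dd N g (g * p) ≤ b := by rw [hgk']; exact pp_norm hN hC1 b k
    have hgp' : dd N g (g * p) = b := by
      have := dd_tri hN g (g * p) (g * k)
      rw [hgk' k] at this
      omega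
    have hball : ∀ y, dd N (g * p) y ≤ C →
        (dd N y (g * k) : ℤ) - dd N (g * p) (g * k) = dd N y (g * l) - dd N (g * p) (g * l) := by
      apply view_ball
      have e : ∀ x, (g * p)⁻¹ * (g * x) = p⁻¹ * x := fun x => by group
      have e1 : p⁻¹ * k = (T N C)^[b] k := pp_inv_mul b k
      have e2 : p⁻¹ * l = (T N C)^[b] l := by rw [← hpl]; exact pp_inv_mul b l
      rw [e, e, e1, e2]
      exact hb
    have views : ∀ i < n - K, V N C ((pp N C i (g * k))⁻¹ * (g * l)) =
        V N C ((T N C)^[i] (g * k)) := by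
      intro i hi
      set a := pp N C i (g * k) with ha
      have key : ∀ x, N x ≤ C → (dd N (a * x) (g * k) : ℤ) - dd N (g * p) (g * k) =
          dd N (a * x) (g * l) - dd N (g * p) (g * l) := by
        intro x hx
        have ha1 : N a ≤ i := pp_norm hN hC1 i _
        have hz : dd N (a * x) g ≤ N g + i + C := by
          have t1 := dd_tri hN (a * x) 1 g
          rw [dd_one, dd_symm hN (a * x) 1, dd_one] at t1
          have := hN.mul a x
          omega
        have hzp := dd_tri hN g (a * x) (g * p)
        rw [dd_symm hN g (a * x)] at hzp
        have main : ∀ e, dd N g e = b + dd N (g * p) e →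
            dd N (a * x) (g * p) + dd N (g * p) e ≤ dd N (a * x) e + 2 * D := by
          intro e he
          have q := dd_hyp hN (a * x) (g * p) g e
          rw [dd_symm hN (g * p) g] at q
          omega
        exact localL hN (by omega) hball (main _ (by rw [hgk']; omega))
          (main _ (by rw [hgk']; omega))
      have fin : V N C (a⁻¹ * (g * l)) = V N C (a⁻¹ * (g * k)) := view_iff.2 (fun x hx => by
        have k1 := key x hx
        have k2 := key 1 (by rw [hN.one]; omega)
        rw [mul_one] at k2
        omega)
      rw [fin]
      exact congrArg _ (pp_inv_mul i (g * k))
    intro i hi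
    rw [track views i hi.le, views i hi]
  · by_cases hn : n ≤ K
    · rw [show n - K = 0 by omega, pp_zero, dd_one]
      have h1 := hN.mul g (pp N C n k)
      have h2 := pp_norm hN hC1 n k
      omega
    have e1 : dd N (pp N C (n - K) (g * k)) (g * k) = N (g * k) - (n - K) :=
      pp_dd_end hN hC1 _ _
    have e2 : dd N (g * pp N C n k) (g * k) = N k - n := by
      rw [dd_left]; exact pp_dd_end hN hC1 n k
    have e5 := hN.mul g k
    by_cases hk : N k ≤ n
    · have t := dd_tri hN (pp N C (n - K) (g * k)) (g * k) (g * pp N C n k)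
      rw [dd_symm hN (g * k) (g * pp N C n k)] at t
      omega
    · have e3 : dd N 1 (pp N C (n - K) (g * k)) ≤ n - K := by
        rw [dd_one]; exact pp_norm hN hC1 _ _
      have e4 : dd N 1 (g * pp N C n k) ≤ N g + n := by
        rw [dd_one]
        have h1 := hN.mul g (pp N C n k)
        have h2 := pp_norm hN hC1 n k
        omega
      have q := dd_hyp hN (pp N C (n - K) (g * k)) (g * pp N C n k) 1 (g * k)
      rw [dd_symm hN _ 1, dd_symm hN _ 1, dd_one (g * k)] at q
      omega

end

end Geo
section Assembly
universe u
variable {G : Type u} [Group G]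

/-- the itinerary of a group element, in unary-coded blocks of length `L` -/
noncomputable def itin (N : G → ℕ) (C L : ℕ) (ε : (G → ℤ) → ℕ) (k : G) (t : ℕ) : Bool :=
  decide (ε (V N C ((T N C)^[t / L] k)) = t % L)

/-- `ε` codes views as numbers below `L` -/
structure Enc (N : G → ℕ) (C L : ℕ) (ε : (G → ℤ) → ℕ) : Prop where
  pos : 0 < L
  lt : ∀ q, ε (V N C q) < L
  inj : ∀ q q', ε (V N C q) = ε (V N C q') → V N C q = V N C q'

lemma V_finite {N : G → ℕ} {D : ℕ} (hN : HN N D) (C : ℕ) : (Set.range (V N C)).Finite := by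
  classical
  let B : Type u := (hN.fin C).toFinset
  let F : (B → Set.Icc (-(C : ℤ)) C) → (G → ℤ) :=
    fun f x => if h : x ∈ (hN.fin C).toFinset then (f ⟨x, h⟩ : ℤ) else 0
  refine (Set.finite_range F).subset ?_
  rintro _ ⟨q, rfl⟩
  have hb : ∀ x : B, (N ((x : G)⁻¹ * q) : ℤ) - N q ∈ Set.Icc (-(C : ℤ)) C := by
    intro x
    have hx : N (x : G) ≤ C := by
      exact (Set.Finite.mem_toFinset (hN.fin C)).1 x.2
    have h1 := hN.mul (x : G)⁻¹ q
    have h2 := hN.mul (x : G) ((x : G)⁻¹ * q)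
    rw [mul_inv_cancel_left] at h2
    rw [hN.inv] at h1
    constructor <;> omega
  refine ⟨fun x => ⟨_, hb x⟩, ?_⟩
  funext x
  by_cases hx : N x ≤ C
  · have hx' : x ∈ (hN.fin C).toFinset := by simpa using hx
    simp only [F, V]
    rw [dif_pos hx', if_pos hx]
  · have hx' : x ∉ (hN.fin C).toFinset := by simpa using hx
    simp only [F, V]
    rw [dif_neg hx', if_neg hx]

lemma exists_enc {N : G → ℕ} {D : ℕ} (hN : HN N D) (C : ℕ) : ∃ L ε, Enc N C L ε := by
  classical
  have hf := V_finite hN C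
  let s := hf.toFinset
  have hs : ∀ q, V N C q ∈ s := fun q => by simp [s]
  let e := s.equivFin
  refine ⟨s.card, fun v => if h : v ∈ s then (e ⟨v, h⟩ : ℕ) else 0, ?_, ?_, ?_⟩
  · exact Finset.card_pos.2 ⟨_, hs 1⟩
  · intro q
    rw [dif_pos (hs q)]
    exact (e ⟨_, hs q⟩).2
  · intro q q' h
    rw [dif_pos (hs q), dif_pos (hs q')] at h
    have := e.injective (Fin.ext h)
    exact congrArg Subtype.val this

variable {N : G → ℕ} {D C L : ℕ} {ε : (G → ℤ) → ℕ}

lemma ag_views (hE : Enc N C L ε) {t : ℕ} {k l : G}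
    (h : Ag t (itin N C L ε l) (itin N C L ε k)) :
    ∀ i < t / L, V N C ((T N C)^[i] l) = V N C ((T N C)^[i] k) := by
  intro i hi
  have hlt := hE.lt ((T N C)^[i] k)
  set e := ε (V N C ((T N C)^[i] k)) with he
  have h1 : (i + 1) * L ≤ t := (Nat.le_div_iff_mul_le hE.pos).1 hi
  have h2 : i * L + e < t := by rw [Nat.add_mul] at h1; omega
  have h3 := h _ h2
  have hd : (i * L + e) / L = i := by
    rw [add_comm, Nat.add_mul_div_right _ _ hE.pos, Nat.div_eq_of_lt hlt, zero_add]
  have hm : (i * L + e) % L = e := by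
    rw [add_comm, Nat.add_mul_mod_self_right, Nat.mod_eq_of_lt hlt]
  simp only [itin, hd, hm] at h3
  apply hE.inj
  have h4 : decide (ε (V N C ((T N C)^[i] k)) = e) = true := decide_eq_true he.symm
  rw [h4] at h3
  exact (of_decide_eq_true h3).trans he

lemma views_ag (hE : Enc N C L ε) {n : ℕ} {k l : G}
    (h : ∀ i < n, V N C ((T N C)^[i] l) = V N C ((T N C)^[i] k)) :
    Ag (n * L) (itin N C L ε l) (itin N C L ε k) := by
  intro i hi
  have := h (i / L) ((Nat.div_lt_iff_lt_mul hE.pos).2 hi)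
  simp only [itin, this]

lemma iso_itin (hN : HN N D) (hC : C = 3 * D + 1) (hE : Enc N C L ε) (k : G) :
    ∃ t, ∀ l, Ag t (itin N C L ε l) (itin N C L ε k) → l = k := by
  have hC1 : 1 ≤ C := by omega
  refine ⟨(N k + 1) * L, fun l hl => ?_⟩
  have hv := ag_views hE hl
  rw [Nat.mul_div_cancel _ hE.pos] at hv
  have h1 : (T N C)^[N k] k = 1 := hN.eq_one _ (by rw [T_iter hN hC1]; omega)
  have h2 := hv (N k) (by omega)
  rw [h1] at h2
  have h3 := V_one hN hC1 h2
  have h4 := views_to hv (N k) (by omega)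
  have h5 := pp_mul (N := N) (C := C) (N k) l
  have h6 := pp_mul (N := N) (C := C) (N k) k
  rw [h3, h4] at h5
  rw [h1] at h6
  exact h5.symm.trans h6

lemma transport (hN : HN N D) (hC : C = 3 * D + 1) {n n' : ℕ} {k k' l : G}
    (hA : min n (2 * D + 1) = min n' (2 * D + 1))
    (hB : ∀ j < 2 * D + 1, V N C ((T N C)^[n - 1 - j] k) = V N C ((T N C)^[n' - 1 - j] k'))
    (hl : ∀ i < n, V N C ((T N C)^[i] l) = V N C ((T N C)^[i] k)) :
    ∀ i < n', V N C ((pp N C i k')⁻¹ * (pp N C n' k' * (T N C)^[n] l)) =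
      V N C ((T N C)^[i] k') := by
  have hpl := views_to hl
  by_cases hn : n < 2 * D + 1
  · have hnn : n' = n := by omega
    subst hnn
    have hv : ∀ i < n', V N C ((T N C)^[i] k) = V N C ((T N C)^[i] k') := by
      intro i hi
      have := hB (n' - 1 - i) (by omega)
      rwa [show n' - 1 - (n' - 1 - i) = i by omega] at this
    have hpk := views_to hv
    intro i hi
    rw [← hpk n' le_rfl, ← hpl n' le_rfl, pp_mul, ← hpk i hi.le, ← hpl i hi.le, pp_inv_mul,
      hl i hi, hv i hi]
  · apply geoL hN hC (by omega)
    intro j hj1 hj2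
    obtain ⟨s, hs⟩ : ∃ s, n' = j + (s + 1) := ⟨n' - 1 - j, by omega⟩
    obtain ⟨i', hi'⟩ : ∃ i', n = i' + (s + 1) := ⟨n - 1 - s, by omega⟩
    have e1 : pp N C (s + 1) ((T N C)^[j] k') = pp N C (s + 1) ((T N C)^[i'] l) := by
      apply pp_congr
      intro i hi
      rw [← Function.iterate_add_apply, ← Function.iterate_add_apply, hl _ (by omega)]
      have := hB (s - i) (by omega)
      rw [show n - 1 - (s - i) = i + i' by omega, show n' - 1 - (s - i) = i + j by omega] at this
      exact this.symm
    have e2 : (pp N C j k')⁻¹ * (pp N C n' k' * (T N C)^[n] l) = (T N C)^[i'] l := by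
      rw [hs, pp_add, e1, hi', add_comm i' (s + 1), Function.iterate_add_apply, mul_assoc,
        inv_mul_cancel_left, pp_mul]
    rw [e2, hl _ (by omega)]
    have := hB s (by omega)
    rwa [show n - 1 - s = i' by omega, show n' - 1 - s = j by omega] at this

lemma sim_of_state (hN : HN N D) (hC : C = 3 * D + 1) (hE : Enc N C L ε)
    {n n' j : ℕ} {k k' : G} (hj : j < L)
    (hA : min n (2 * D + 1) = min n' (2 * D + 1))
    (hB : ∀ j < 2 * D + 1, V N C ((T N C)^[n - 1 - j] k) = V N C ((T N C)^[n' - 1 - j] k'))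
    (hc : V N C ((T N C)^[n] k) = V N C ((T N C)^[n'] k')) :
    Sim (itin N C L ε) (pp N C n' k' * (pp N C n k)⁻¹) (n * L + j) k (n' * L + j) k' := by
  intro l hl
  have hdiv : ∀ m s, (m * L + s) / L = m + s / L := fun m s => by
    rw [add_comm, Nat.add_mul_div_right _ _ hE.pos, add_comm]
  have hmod : ∀ m s, (m * L + s) % L = s % L := fun m s => by
    rw [add_comm, Nat.add_mul_mod_self_right]
  have hv := ag_views hE hl
  rw [hdiv, Nat.div_eq_of_lt hj, add_zero] at hv
  have e0 : pp N C n' k' * (pp N C n k)⁻¹ * l = pp N C n' k' * (T N C)^[n] l := by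
    rw [mul_assoc, ← views_to hv n le_rfl, pp_inv_mul]
  rw [e0]
  have hw := transport hN hC hA hB hv
  have htr := track hw
  set l' := pp N C n' k' * (T N C)^[n] l with hl'
  have e1 : (T N C)^[n'] l' = (T N C)^[n] l := by
    rw [htr n' le_rfl, hl', inv_mul_cancel_left]
  have e2 : ∀ s, itin N C L ε l' (n' * L + s) = itin N C L ε l (n * L + s) := by
    intro s
    simp only [itin, hdiv, hmod]
    rw [add_comm n', add_comm n, Function.iterate_add_apply, Function.iterate_add_apply, e1]
  refine ⟨?_, fun m => by rw [add_assoc, add_assoc, e2]⟩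
  intro i hi
  by_cases hi' : i < n' * L
  · refine views_ag hE (n := n') (fun i hi => ?_) i hi'
    rw [htr i hi.le, hw i hi]
  · obtain ⟨s, rfl⟩ := Nat.exists_eq_add_of_le (not_lt.1 hi')
    rw [e2, hl _ (by omega)]
    simp only [itin, hdiv, hmod]
    rw [Nat.div_eq_of_lt (show s < L by omega), add_zero, add_zero, hc]

/-- the local state -/
noncomputable def st (N : G → ℕ) (C L m : ℕ) (t : ℕ) (k : G) :
    ℕ × ℕ × (Fin m → G → ℤ) × (G → ℤ) :=
  (t % L, min (t / L) m, fun j => V N C ((T N C)^[t / L - 1 - j] k), V N C ((T N C)^[t / L] k))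

/-- the finite set of states -/
def stSet (N : G → ℕ) (C L m : ℕ) : Set (ℕ × ℕ × (Fin m → G → ℤ) × (G → ℤ)) :=
  Set.Iio L ×ˢ Set.Iic m ×ˢ Set.pi Set.univ (fun _ => Set.range (V N C)) ×ˢ Set.range (V N C)

lemma stSet_finite (hN : HN N D) (m : ℕ) : (stSet N C L m).Finite :=
  (Set.finite_Iio L).prod ((Set.finite_Iic m).prod
    ((Set.Finite.pi (fun _ => V_finite hN C)).prod (V_finite hN C)))

lemma st_mem (hL : 0 < L) (m t : ℕ) (k : G) : st N C L m t k ∈ stSet N C L m :=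
  ⟨Nat.mod_lt _ hL, Nat.min_le_right _ _, fun _ _ => ⟨_, rfl⟩, ⟨_, rfl⟩⟩

lemma sim_of_st (hN : HN N D) (hC : C = 3 * D + 1) (hE : Enc N C L ε) {t t' : ℕ} {k k' : G}
    (h : st N C L (2 * D + 1) t k = st N C L (2 * D + 1) t' k') :
    Sim (itin N C L ε) (pp N C (t' / L) k' * (pp N C (t / L) k)⁻¹) t k t' k' := by
  simp only [st, Prod.mk.injEq] at h
  obtain ⟨h1, h2, h3, h4⟩ := h
  have := sim_of_state hN hC hE (Nat.mod_lt t hE.pos) h2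
    (fun j hj => congrFun h3 ⟨j, hj⟩) h4
  have e1 : t / L * L + t % L = t := Nat.div_add_mod' t L
  have e2 : t' / L * L + t % L = t' := by rw [h1]; exact Nat.div_add_mod' t' L
  rwa [e1, e2] at this

theorem assembly (hN : HN N D) (R : Subgroup ((ℕ → Bool) ≃ₜ (ℕ → Bool)))
    (hR : ∀ f, f ∈ R ↔ IsRational f) : ∃ φ : G →* ↥R, Function.Injective φ := by
  obtain ⟨C, hC⟩ : ∃ C, C = 3 * D + 1 := ⟨_, rfl⟩
  obtain ⟨L, ε, hE⟩ := exists_enc hN C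
  have hL := hE.pos
  refine symb (r := itin N C L ε) (iso_itin hN hC hE) ?_ R hR
  intro g
  obtain ⟨K, M, hact⟩ := act hN hC g
  have hdiv : ∀ t : ℕ, (t / L - K) * L / L = t / L - K := fun t => Nat.mul_div_cancel _ hL
  refine ⟨fun t => (t / L - K) * L, ?_, ?_, ?_⟩
  · intro t k l h
    exact views_ag hE ((hact (t / L) k).1 l (ag_views hE h))
  · intro A
    refine ⟨(A + K) * L, fun t ht => ?_⟩
    have h1 : A + K ≤ t / L := (Nat.le_div_iff_mul_le hL).2 ht
    have h2 : A ≤ t / L - K := by omega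
    exact h2.trans (Nat.le_mul_of_pos_right _ hL)
  · refine ⟨_, fun t k => (st N C L (2 * D + 1) t k,
      st N C L (2 * D + 1) ((t / L - K) * L) (g * k),
      (pp N C (t / L - K) (g * k))⁻¹ * (g * pp N C (t / L) k)), ?_, ?_⟩
    · refine ((stSet_finite (C := C) (L := L) hN (2 * D + 1)).prod
        ((stSet_finite (C := C) (L := L) hN (2 * D + 1)).prod (hN.fin M))).subset ?_
      rintro _ ⟨⟨t, k⟩, rfl⟩
      exact ⟨st_mem hL _ _ _, st_mem hL _ _ _, (hact (t / L) k).2⟩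
    · intro t k t' k' h
      simp only [Prod.mk.injEq] at h
      obtain ⟨h1, h2, h3⟩ := h
      have a1 := sim_of_st hN hC hE h1
      have a2 := sim_of_st hN hC hE h1.symm
      have a3 := sim_of_st hN hC hE h2
      have a4 := sim_of_st hN hC hE h2.symm
      rw [hdiv, hdiv] at a3 a4
      have e : g * (pp N C (t' / L) k' * (pp N C (t / L) k)⁻¹) * g⁻¹ =
          pp N C (t' / L - K) (g * k') * (pp N C (t / L - K) (g * k))⁻¹ := by
        have e1 : g * pp N C (t' / L) k' = pp N C (t' / L - K) (g * k') *
            ((pp N C (t / L - K) (g * k))⁻¹ * (g * pp N C (t / L) k)) := by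
          rw [h3, mul_inv_cancel_left]
        rw [← mul_assoc g, e1]; group
      refine ⟨_, a1, ?_, ?_, ?_⟩
      · rw [mul_inv_rev, inv_inv]; exact a2
      · rw [e]; exact a3
      · rw [e, mul_inv_rev, inv_inv]; exact a4

end Assembly
section Word
universe u
variable {G : Type u} [Group G]

lemma wn_le (S : Set G) (l : List G) (hl : ∀ x ∈ l, x ∈ S ∨ x⁻¹ ∈ S) :
    wordNorm S l.prod ≤ l.length := Nat.sInf_le ⟨l, rfl, hl, rfl⟩

lemma wn_exists {S : Set G} (hS : Subgroup.closure S = ⊤) (g : G) :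
    ∃ l : List G, l.length = wordNorm S g ∧ (∀ x ∈ l, x ∈ S ∨ x⁻¹ ∈ S) ∧ l.prod = g := by
  have hne : {k | ∃ l : List G, l.length = k ∧ (∀ x ∈ l, x ∈ S ∨ x⁻¹ ∈ S) ∧ l.prod = g}.Nonempty := by
    have hg : g ∈ Subgroup.closure S := by rw [hS]; trivial
    rw [← Subgroup.mem_toSubmonoid, Subgroup.closure_toSubmonoid] at hg
    obtain ⟨l, h1, h2⟩ := Submonoid.exists_list_of_mem_closure hg
    exact ⟨_, l, rfl, h1, h2⟩
  exact Nat.sInf_mem hne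

lemma wn_inv_le {S : Set G} (hS : Subgroup.closure S = ⊤) (g : G) :
    wordNorm S g⁻¹ ≤ wordNorm S g := by
  obtain ⟨l, h1, h2, h3⟩ := wn_exists hS g
  have := wn_le S (l.map (fun x => x⁻¹)).reverse (by
    intro x hx
    simp only [List.mem_reverse, List.mem_map] at hx
    obtain ⟨y, hy, rfl⟩ := hx
    rw [inv_inv]
    exact (h2 y hy).symm)
  rw [← List.prod_inv_reverse, h3] at this
  simpa [h1] using this

lemma wn_HN {S : Finset G} (hS : Subgroup.closure (S : Set G) = ⊤) {δ : ℝ}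
    (hd : ∀ w x y z : G,
      min (gromovProd (S : Set G) w x z) (gromovProd (S : Set G) w z y) - δ ≤
        gromovProd (S : Set G) w x y) : HN (wordNorm (S : Set G)) ⌈2 * δ⌉₊ := by
  have hone : wordNorm (S : Set G) 1 = 0 := by
    have := wn_le (S : Set G) [] (by simp)
    simpa using this
  have hinv : ∀ g, wordNorm (S : Set G) g⁻¹ = wordNorm (S : Set G) g := fun g =>
    le_antisymm (wn_inv_le hS g) (by simpa using wn_inv_le hS g⁻¹)
  have heq : ∀ g, wordNorm (S : Set G) g = 0 → g = 1 := by
    intro g hg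
    obtain ⟨l, h1, h2, h3⟩ := wn_exists hS g
    rw [hg, List.length_eq_zero_iff] at h1
    rw [← h3, h1, List.prod_nil]
  have hmul : ∀ g h, wordNorm (S : Set G) (g * h) ≤
      wordNorm (S : Set G) g + wordNorm (S : Set G) h := by
    intro g h
    obtain ⟨l, h1, h2, h3⟩ := wn_exists hS g
    obtain ⟨l', h1', h2', h3'⟩ := wn_exists hS h
    have := wn_le (S : Set G) (l ++ l') (by
      intro x hx
      rcases List.mem_append.1 hx with hx | hx
      · exact h2 x hx
      · exact h2' x hx)
    rw [List.prod_append, h3, h3', List.length_append] at this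
    omega
  refine ⟨hone, heq, hinv, hmul, ?_, ?_, ?_⟩
  · intro g hg
    obtain ⟨l, h1, h2, h3⟩ := wn_exists hS g
    cases l with
    | nil => simp only [List.length_nil] at h1; omega
    | cons y l =>
      simp only [List.length_cons] at h1
      rw [List.prod_cons] at h3
      have a1 := wn_le (S : Set G) l (fun x hx => h2 x (List.mem_cons_of_mem _ hx))
      have a2 := wn_le (S : Set G) [y] (by
        intro x hx
        rw [List.mem_singleton] at hx
        rw [hx]
        exact h2 y List.mem_cons_self)
      rw [List.prod_singleton, List.length_singleton] at a2
      have a3 := hmul y l.prod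
      rw [h3] at a3
      refine ⟨y, by omega, ?_⟩
      rw [← h3, inv_mul_cancel_left, h3]
      omega
  · intro n
    have hfin : {x : G | x ∈ (S : Set G) ∨ x⁻¹ ∈ (S : Set G)}.Finite := by
      refine Set.Finite.union (s := {x : G | x ∈ (S : Set G)}) S.finite_toSet ?_
      exact S.finite_toSet.preimage (inv_injective.injOn)
    have : Finite {x : G | x ∈ (S : Set G) ∨ x⁻¹ ∈ (S : Set G)} := hfin
    refine ((List.finite_length_le {x : G | x ∈ (S : Set G) ∨ x⁻¹ ∈ (S : Set G)} n).image
      (fun l => (l.map Subtype.val).prod)).subset ?_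
    intro g hg
    obtain ⟨l, h1, h2, h3⟩ := wn_exists hS g
    lift l to List {x : G | x ∈ (S : Set G) ∨ x⁻¹ ∈ (S : Set G)} using h2
    refine ⟨l, ?_, h3⟩
    rw [List.length_map] at h1
    exact h1.le.trans hg
  · intro x y z w
    have h := hd w x y z
    simp only [gromovProd, wordDist] at h
    have s1 := hinv (y⁻¹ * z)
    rw [mul_inv_rev, inv_inv] at s1
    rw [s1] at h
    have hc := Nat.le_ceil (2 * δ)
    rw [← Nat.cast_le (α := ℝ)]
    push_cast
    rcases min_choice (((wordNorm (S : Set G) (x⁻¹ * w) : ℝ) + (wordNorm (S : Set G) (z⁻¹ * w) : ℝ) -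
        (wordNorm (S : Set G) (x⁻¹ * z) : ℝ)) / 2)
      (((wordNorm (S : Set G) (z⁻¹ * w) : ℝ) + (wordNorm (S : Set G) (y⁻¹ * w) : ℝ) -
        (wordNorm (S : Set G) (y⁻¹ * z) : ℝ)) / 2) with hm | hm
    · rw [hm] at h
      have := le_max_left ((wordNorm (S : Set G) (x⁻¹ * z) : ℝ) + wordNorm (S : Set G) (y⁻¹ * w))
        ((wordNorm (S : Set G) (x⁻¹ * w) : ℝ) + wordNorm (S : Set G) (y⁻¹ * z))
      linarith
    · rw [hm] at h
      have := le_max_right ((wordNorm (S : Set G) (x⁻¹ * z) : ℝ) + wordNorm (S : Set G) (y⁻¹ * w))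
        ((wordNorm (S : Set G) (x⁻¹ * w) : ℝ) + wordNorm (S : Set G) (y⁻¹ * z))
      linarith

end Word

end HypRat

/-!
Belk–Bleak–Matucci (2021): every hyperbolic group embeds in the rational group
`ℛ` of rational homeomorphisms of the Cantor space `ℕ → Bool`.
-/
theorem hyperbolic_embeds_in_rational_group (G : Type*) [Group G]
    (hG : IsHyperbolic G)
    (R : Subgroup ((ℕ → Bool) ≃ₜ (ℕ → Bool)))
    (hR : ∀ f, f ∈ R ↔ IsRational f) :
    ∃ φ : G →* ↥R, Function.Injective φ := by
  obtain ⟨S, hS, δ, _, hd⟩ := hG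
  exact HypRat.assembly (HypRat.wn_HN hS hd) R hR
end
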